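/- arXiv:1703.00941 — 8 statements merged into one kernel-verified Lean document; each statement's English description precedes it below -/
import Mathlib

section
/- Let n ≥ 1 and let weights w(i,j) ∈ ℤ ∪ {+∞} be given for all 0 ≤ i < j ≤ n. Let T be the LWS table for these weights. Then for every j with 1 ≤ j ≤ n, T[j] equals the minimum, over all k ≥ 1 and all strictly increasing index sequences 0 = i_0 < i_1 < ⋯ < i_k = j, of Σ_{ℓ=1}^{k} w(i_{ℓ−1}, i_ℓ) (minimum taken in ℤ ∪ {+∞}). -/
/-!
Split a path at its last step: the rest is a path to a smaller index. By induction on the length of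
a path, its weight is at least the table value at its end; by induction on the index, the minimisers
in the recurrence, followed backwards, form a path whose weight is the table value.
-/

/-- `p` visits strictly increasing indices `a = p 0 < p 1 < ⋯ < p k = b`; its values beyond `k`
are irrelevant. -/
structure IsIncreasingPath {ι : Type*} [LT ι] (p : ℕ → ι) (k : ℕ) (a b : ι) : Prop where
  source : p 0 = a
  target : p k = b
  step_lt : ∀ ℓ, ℓ < k → p ℓ < p (ℓ + 1)

/-- The total weight of the first `k` steps of `p`. -/
def pathWeight {ι M : Type*} [AddCommMonoid M] (w : ι → ι → M) (p : ℕ → ι) (k : ℕ) : M :=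
  ∑ ℓ ∈ Finset.range k, w (p ℓ) (p (ℓ + 1))

/-- `T` satisfies the least-weight-subsequence recurrence with weights `w` at every index up to `n`,
where `⊥` plays the role of the index `0`. -/
structure IsLWSTable {ι M : Type*} [Preorder ι] [OrderBot ι] [LocallyFiniteOrderBot ι]
    [Zero M] [Add M] [SemilatticeInf M] [OrderTop M]
    (w : ι → ι → M) (T : ι → M) (n : ι) : Prop where
  bot : T ⊥ = 0
  recurrence : ∀ j, ⊥ < j → j ≤ n → T j = (Finset.Iio j).inf fun i => T i + w i j

namespace IsIncreasingPath

variable {ι : Type*} [LT ι] {p : ℕ → ι} {k : ℕ} {a b c : ι}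

theorem refl (a : ι) : IsIncreasingPath (fun _ => a) 0 a a :=
  ⟨rfl, rfl, fun _ hℓ => absurd hℓ (Nat.not_lt_zero _)⟩

theorem length_pos (hp : IsIncreasingPath p k a b) (hab : a ≠ b) : 0 < k := by
  refine Nat.pos_of_ne_zero fun hk => hab ?_
  rw [← hp.source, ← hp.target, hk]

theorem drop_last (hp : IsIncreasingPath p (k + 1) a b) : IsIncreasingPath p k a (p k) :=
  ⟨hp.source, rfl, fun ℓ hℓ => hp.step_lt ℓ (hℓ.trans k.lt_succ_self)⟩

theorem last_step_lt (hp : IsIncreasingPath p (k + 1) a b) : p k < b :=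
  hp.target ▸ hp.step_lt k k.lt_succ_self

theorem snoc (hp : IsIncreasingPath p k a b) (hbc : b < c) :
    IsIncreasingPath (Function.update p (k + 1) c) (k + 1) a c where
  source := by rw [Function.update_of_ne k.succ_ne_zero.symm, hp.source]
  target := Function.update_self ..
  step_lt ℓ hℓ := by
    rw [Function.update_of_ne hℓ.ne]
    obtain hlt | rfl := Nat.lt_succ_iff_lt_or_eq.mp hℓ
    · rw [Function.update_of_ne (Nat.succ_lt_succ hlt).ne]
      exact hp.step_lt ℓ hlt
    · rwa [Function.update_self, hp.target]

end IsIncreasingPath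

section PathWeight

variable {ι M : Type*} [AddCommMonoid M] (w : ι → ι → M) (p : ℕ → ι) (k : ℕ)

theorem pathWeight_zero : pathWeight w p 0 = 0 :=
  Finset.sum_range_zero _

theorem pathWeight_succ :
    pathWeight w p (k + 1) = pathWeight w p k + w (p k) (p (k + 1)) :=
  Finset.sum_range_succ _ k

theorem pathWeight_congr {p q : ℕ → ι} {k : ℕ} (hpq : ∀ ℓ ≤ k, p ℓ = q ℓ) :
    pathWeight w p k = pathWeight w q k :=
  Finset.sum_congr rfl fun ℓ hℓ => by
    have hℓk := Finset.mem_range.mp hℓ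
    rw [hpq ℓ hℓk.le, hpq (ℓ + 1) hℓk]

theorem pathWeight_update_succ (c : ι) :
    pathWeight w (Function.update p (k + 1) c) (k + 1) = pathWeight w p k + w (p k) c := by
  rw [pathWeight_succ, Function.update_self, Function.update_of_ne k.lt_succ_self.ne]
  congr 1
  exact pathWeight_congr w fun ℓ hℓ => Function.update_of_ne (Nat.lt_succ_of_le hℓ).ne ..

end PathWeight

theorem wellFoundedLT_of_locallyFiniteOrderBot (ι : Type*) [Preorder ι]
    [LocallyFiniteOrderBot ι] : WellFoundedLT ι :=
  StrictMono.wellFoundedLT (f := Finset.Iic) fun _ _ => Finset.Iic_ssubset_Iic.mpr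

namespace IsLWSTable

variable {ι M : Type*} {w : ι → ι → M} {T : ι → M} {n j : ι}

theorem exists_eq_add [Preorder ι] [OrderBot ι] [LocallyFiniteOrderBot ι]
    [Zero M] [Add M] [LinearOrder M] [OrderTop M]
    (hT : IsLWSTable w T n) (hj : ⊥ < j) (hjn : j ≤ n) :
    ∃ i < j, T j = T i + w i j := by
  obtain ⟨i, hi, hmin⟩ :=
    (Finset.Iio j).exists_mem_eq_inf ⟨⊥, Finset.mem_Iio.mpr hj⟩ fun i => T i + w i j
  exact ⟨i, Finset.mem_Iio.mp hi, (hT.recurrence j hj hjn).trans hmin⟩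

theorem le_pathWeight [Preorder ι] [OrderBot ι] [LocallyFiniteOrderBot ι]
    [AddCommMonoid M] [SemilatticeInf M] [OrderTop M] [AddRightMono M]
    (hT : IsLWSTable w T n) (hjn : j ≤ n) {p : ℕ → ι} {k : ℕ} (hp : IsIncreasingPath p k ⊥ j) :
    T j ≤ pathWeight w p k := by
  induction k generalizing j with
  | zero => rw [← hp.target, hp.source, hT.bot, pathWeight_zero]
  | succ k ih =>
    have hlt : p k < j := hp.last_step_lt
    calc
      T j = (Finset.Iio j).inf fun i => T i + w i j :=
        hT.recurrence j (bot_le.trans_lt hlt) hjn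
      _ ≤ T (p k) + w (p k) j := Finset.inf_le (Finset.mem_Iio.mpr hlt)
      _ ≤ pathWeight w p k + w (p k) j := by
        gcongr
        exact ih (hlt.le.trans hjn) hp.drop_last
      _ = pathWeight w p (k + 1) := by rw [pathWeight_succ, hp.target]

theorem exists_pathWeight_eq [PartialOrder ι] [OrderBot ι] [LocallyFiniteOrderBot ι]
    [AddCommMonoid M] [LinearOrder M] [OrderTop M] (hT : IsLWSTable w T n) (hjn : j ≤ n) :
    ∃ k p, IsIncreasingPath p k ⊥ j ∧ T j = pathWeight w p k := by
  have := wellFoundedLT_of_locallyFiniteOrderBot ι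
  induction j using WellFoundedLT.induction with
  | ind j ih =>
    obtain rfl | hj := eq_bot_or_bot_lt j
    · exact ⟨0, _, .refl ⊥, by rw [hT.bot, pathWeight_zero]⟩
    · obtain ⟨i, hij, hTj⟩ := hT.exists_eq_add hj hjn
      obtain ⟨k, p, hp, hTi⟩ := ih i hij (hij.le.trans hjn)
      refine ⟨k + 1, Function.update p (k + 1) j, hp.snoc hij, ?_⟩
      rw [pathWeight_update_succ, hTj, hTi, hp.target]

end IsLWSTable

theorem stmt_0_general {ι M : Type*} [PartialOrder ι] [OrderBot ι] [LocallyFiniteOrderBot ι]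
    [AddCommMonoid M] [LinearOrder M] [OrderTop M] [AddRightMono M]
    {w : ι → ι → M} {T : ι → M} {n j : ι} (hT : IsLWSTable w T n) (hj : ⊥ < j) (hjn : j ≤ n) :
    (∃ k, 1 ≤ k ∧ ∃ p : ℕ → ι, p 0 = ⊥ ∧ p k = j ∧
        (∀ ℓ, ℓ < k → p ℓ < p (ℓ + 1)) ∧
        T j = ∑ ℓ ∈ Finset.range k, w (p ℓ) (p (ℓ + 1))) ∧
    (∀ k, 1 ≤ k → ∀ p : ℕ → ι, p 0 = ⊥ → p k = j →
        (∀ ℓ, ℓ < k → p ℓ < p (ℓ + 1)) →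
        T j ≤ ∑ ℓ ∈ Finset.range k, w (p ℓ) (p (ℓ + 1))) := by
  obtain ⟨k, p, hp, hweight⟩ := hT.exists_pathWeight_eq hjn
  exact ⟨⟨k, hp.length_pos hj.ne, p, hp.source, hp.target, hp.step_lt, hweight⟩,
    fun _ _ _ hsource htarget hstep => hT.le_pathWeight hjn ⟨hsource, htarget, hstep⟩⟩

/-- The LWS table value `T[j]` equals the minimum, over all
strictly increasing index sequences `0 = i_0 < i_1 < ⋯ < i_k = j` (`k ≥ 1`),
of the total weight `Σ_{ℓ=1}^{k} w(i_{ℓ-1}, i_ℓ)`, where weights live in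
`ℤ ∪ {+∞}` (modeled as `WithTop ℤ`). The LWS table is given by `T[0] = 0`
and `T[j] = min_{0 ≤ i < j} (T[i] + w(i,j))` for `1 ≤ j ≤ n`. -/
theorem stmt_0 (n : ℕ) (hn : 1 ≤ n) (w : ℕ → ℕ → WithTop ℤ)
    (T : ℕ → WithTop ℤ) (hT0 : T 0 = 0)
    (hT : ∀ j, 1 ≤ j → j ≤ n →
      T j = (Finset.range j).inf (fun i => T i + w i j))
    (j : ℕ) (hj1 : 1 ≤ j) (hjn : j ≤ n) :
    (∃ k, 1 ≤ k ∧ ∃ p : ℕ → ℕ, p 0 = 0 ∧ p k = j ∧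
        (∀ ℓ, ℓ < k → p ℓ < p (ℓ + 1)) ∧
        T j = ∑ ℓ ∈ Finset.range k, w (p ℓ) (p (ℓ + 1))) ∧
    (∀ k, 1 ≤ k → ∀ p : ℕ → ℕ, p 0 = 0 → p k = j →
        (∀ ℓ, ℓ < k → p ℓ < p (ℓ + 1)) →
        T j ≤ ∑ ℓ ∈ Finset.range k, w (p ℓ) (p (ℓ + 1))) := by
  have hLWS : IsLWSTable w T n := ⟨hT0, by simpa only [Nat.Iio_eq_range] using! hT⟩
  exact stmt_0_general hLWS hj1 hjn
end

section
/- Let d, W, n ≥ 1 and let a_1,…,a_n, b_1,…,b_n ∈ {−W,…,W}^d. Let O denote the all-zeros vector in ℤ^d and define vectors in ℤ^{d+2}: μ_0 = (dW, 0, O), σ_{2n+1} = (dW, dW, O), μ_i = (0, dW, a_i) and σ_i = (0, 0, O) for i = 1,…,n, and μ_{n+j} = (0, 0, O) and σ_{n+j} = (dW, 0, b_j) for j = 1,…,n. Let T be the LWS table on indices 0,…,2n+1 with weights w(i,j) = ⟨μ_i, σ_j⟩ for 0 ≤ i < j ≤ 2n+1. Then T[i] = 0 for all i = 1,…,n, and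 T[n+j] = min_{1 ≤ i ≤ n, 1 ≤ j′ ≤ j} ⟨a_i, b_{j′}⟩ for all j = 1,…,n. -/
/-- Standard inner product on `ℤ^d`. -/
def dotInt {d : ℕ} (u v : Fin d → ℤ) : ℤ := ∑ k, u k * v k

/-- Standard inner product on `ℤ^{d+2}`, viewing a vector as a pair of scalar
coordinates followed by a vector in `ℤ^d`. -/
def ip3 {d : ℕ} (u v : ℤ × ℤ × (Fin d → ℤ)) : ℤ :=
  u.1 * v.1 + u.2.1 * v.2.1 + dotInt u.2.2 v.2.2

/-! A step of weight zero lets the table copy earlier values. On `0,…,n` all steps are free, so `T`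
vanishes there. Reaching `n + j` from some `1 ≤ i ≤ n` costs `⟨a i, b j⟩`, and moving on from
`n + j'` to `n + j` is free, so `T[n + j]` is the running minimum of these costs. The only other
way to reach `n + j` is the step from `0`, whose weight `(d W)²` is at least `⟨a 1, b j⟩`, so it
never improves the minimum. -/

/-- `T` is the least-weight-subsequence (LWS) table on the indices `0,…,N` for the weights `w`.
Only the values `w i j` with `i < j ≤ N` matter, and `⊤` plays the role of `+∞`. -/
structure IsLWSTable_s1 {α : Type*} [AddZeroClass α] [SemilatticeInf α] [OrderTop α]
    (w : ℕ → ℕ → α) (N : ℕ) (T : ℕ → α) : Prop where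
  apply_zero : T 0 = 0
  apply_eq_inf : ∀ j, 1 ≤ j → j ≤ N → T j = (Finset.range j).inf fun i => T i + w i j

namespace IsLWSTable_s1

variable {α : Type*} [AddZeroClass α] [SemilatticeInf α] [OrderTop α]
  {w : ℕ → ℕ → α} {N n m : ℕ} {T : ℕ → α}

lemma le_apply_iff (hT : IsLWSTable_s1 w N T) {j : ℕ} (hj : 1 ≤ j) (hjN : j ≤ N) {c : α} :
    c ≤ T j ↔ ∀ i < j, c ≤ T i + w i j := by
  simp only [hT.apply_eq_inf j hj hjN, Finset.le_inf_iff, Finset.mem_range]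

lemma apply_eq_zero (hT : IsLWSTable_s1 w N T) (hnN : n ≤ N)
    (hw : ∀ i j, i < j → j ≤ n → w i j = 0) {j : ℕ} (hj : j ≤ n) : T j = 0 := by
  induction j using Nat.strong_induction_on with
  | _ j ih =>
    rcases j.eq_zero_or_pos with rfl | hpos
    · exact hT.apply_zero
    · have hfree : ∀ i ∈ Finset.range j, T i + w i j = 0 := fun i hi => by
        have hij := Finset.mem_range.mp hi
        rw [ih i hij (hij.le.trans hj), hw i j hij hj, add_zero]
      rw [hT.apply_eq_inf j hpos (hj.trans hnN), Finset.inf_congr rfl hfree,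
        Finset.inf_const (Finset.nonempty_range_iff.mpr hpos.ne')]

lemma le_apply_add_iff (hT : IsLWSTable_s1 w N T) (hT₀ : ∀ i ≤ n, T i = 0) {j : ℕ} (hj : 1 ≤ j)
    (hjN : n + j ≤ N) (hw : ∀ k, 1 ≤ k → k < j → w (n + k) (n + j) = 0)
    (hw₀ : ∃ i ∈ Finset.Icc 1 n, w i (n + j) ≤ w 0 (n + j)) {c : α} :
    c ≤ T (n + j) ↔
      (∀ i ∈ Finset.Icc 1 n, c ≤ w i (n + j)) ∧ ∀ k ∈ Finset.Ico 1 j, c ≤ T (n + k) := by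
  have from_left : ∀ i ≤ n, T i + w i (n + j) = w i (n + j) := fun i hi => by
    rw [hT₀ i hi, zero_add]
  have from_right : ∀ k ∈ Finset.Ico 1 j, T (n + k) + w (n + k) (n + j) = T (n + k) :=
    fun k hk => by
      have ⟨hk₁, hkj⟩ := Finset.mem_Ico.mp hk
      rw [hw k hk₁ hkj, add_zero]
  rw [hT.le_apply_iff (by lia) hjN]
  refine ⟨fun h => ⟨fun i hi => ?_, fun k hk => ?_⟩, fun ⟨hleft, hright⟩ i hi => ?_⟩
  · have hin := (Finset.mem_Icc.mp hi).2
    exact from_left i hin ▸ h i (by lia)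
  · have hkj := (Finset.mem_Ico.mp hk).2
    exact from_right k hk ▸ h (n + k) (by lia)
  · rcases le_or_gt i n with hin | hni
    · rw [from_left i hin]
      rcases i.eq_zero_or_pos with rfl | hpos
      · obtain ⟨i, hi, hdom⟩ := hw₀
        exact (hleft i hi).trans hdom
      · exact hleft i (Finset.mem_Icc.mpr ⟨hpos, hin⟩)
    · obtain ⟨k, rfl⟩ := Nat.exists_eq_add_of_le hni.le
      have hk : k ∈ Finset.Ico 1 j := Finset.mem_Ico.mpr (by lia)
      exact (hright k hk).trans_eq (from_right k hk).symm

theorem apply_add_eq_inf (hT : IsLWSTable_s1 w N T) (hT₀ : ∀ i ≤ n, T i = 0) (hmN : n + m ≤ N)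
    (hw : ∀ k j, 1 ≤ k → k < j → j ≤ m → w (n + k) (n + j) = 0)
    (hw₀ : ∀ j, 1 ≤ j → j ≤ m → ∃ i ∈ Finset.Icc 1 n, w i (n + j) ≤ w 0 (n + j))
    {j : ℕ} (hj : 1 ≤ j) (hjm : j ≤ m) :
    T (n + j) = (Finset.Icc 1 n ×ˢ Finset.Icc 1 j).inf fun p => w p.1 (n + p.2) := by
  induction j using Nat.strong_induction_on with
  | _ j ih =>
    refine eq_of_forall_le_iff fun c => ?_
    have recurrence : ∀ k, 1 ≤ k → k ≤ m → (c ≤ T (n + k) ↔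
        (∀ i ∈ Finset.Icc 1 n, c ≤ w i (n + k)) ∧ ∀ l ∈ Finset.Ico 1 k, c ≤ T (n + l)) :=
      fun k hk hkm => hT.le_apply_add_iff hT₀ hk (by lia)
        (fun l hl hlk => hw l k hl hlk hkm) (hw₀ k hk hkm)
    have earlier : (∀ k ∈ Finset.Ico 1 j, c ≤ T (n + k)) ↔
        ∀ k ∈ Finset.Ico 1 j, ∀ i ∈ Finset.Icc 1 n, c ≤ w i (n + k) := by
      refine ⟨fun h k hk => ?_, fun h k hk => ?_⟩
      · have ⟨hk₁, hkj⟩ := Finset.mem_Ico.mp hk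
        exact ((recurrence k hk₁ (hkj.le.trans hjm)).mp (h k hk)).1
      · have ⟨hk₁, hkj⟩ := Finset.mem_Ico.mp hk
        rw [ih k hkj hk₁ (hkj.le.trans hjm), Finset.inf_product_right]
        exact Finset.le_inf fun l hl =>
          Finset.le_inf (h l (Finset.Icc_subset_Ico_right hkj hl))
    rw [recurrence j hj hjm, earlier, Finset.inf_product_right, ← Finset.Ico_insert_right hj]
    simp only [Finset.inf_insert, le_inf_iff, Finset.le_inf_iff]

end IsLWSTable_s1

section InnerProduct

variable {d : ℕ} {u v : Fin d → ℤ} {A B : ℤ}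

lemma dotInt_le (hu : ∀ k, |u k| ≤ A) (hv : ∀ k, |v k| ≤ B) : dotInt u v ≤ d * (A * B) := by
  have hterm : ∀ k ∈ Finset.univ, u k * v k ≤ A * B := fun k _ =>
    calc u k * v k ≤ |u k| * |v k| := (le_abs_self _).trans_eq (abs_mul _ _)
      _ ≤ A * B := mul_le_mul (hu k) (hv k) (abs_nonneg _) ((abs_nonneg _).trans (hu k))
  simpa only [dotInt, Finset.card_univ, Fintype.card_fin, nsmul_eq_mul] using
    Finset.sum_le_card_nsmul Finset.univ _ _ hterm

lemma dotInt_le_mul_self (hu : ∀ k, |u k| ≤ A) (hv : ∀ k, |v k| ≤ A) :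
    dotInt u v ≤ (d * A) * (d * A) := by
  have hd : (d : ℤ) ≤ d * d := mod_cast d.le_mul_self
  calc dotInt u v ≤ d * (A * A) := dotInt_le hu hv
    _ ≤ (d * d) * (A * A) := mul_le_mul_of_nonneg_right hd (mul_self_nonneg A)
    _ = (d * A) * (d * A) := mul_mul_mul_comm _ _ _ _

lemma ip3_zero_left (y : ℤ × ℤ × (Fin d → ℤ)) : ip3 (0, 0, 0) y = 0 := by
  simp [ip3, dotInt]

lemma ip3_zero_right (x : ℤ × ℤ × (Fin d → ℤ)) : ip3 x (0, 0, 0) = 0 := by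
  simp [ip3, dotInt]

end InnerProduct

/-- In the reduction from `MinInnProd` to `LowRankLWS`, the LWS
table on indices `0,…,2n+1` with weights `w(i,j) = ⟨μ_i, σ_j⟩` satisfies
`T[i] = 0` for `1 ≤ i ≤ n`, and
`T[n+j] = min_{1 ≤ i ≤ n, 1 ≤ j' ≤ j} ⟨a_i, b_{j'}⟩` for `1 ≤ j ≤ n`. -/
theorem stmt_1 (d : ℕ) (hd : 1 ≤ d) (W : ℤ) (hW : 1 ≤ W) (n : ℕ) (hn : 1 ≤ n)
    (a b : ℕ → Fin d → ℤ)
    (ha : ∀ i, 1 ≤ i → i ≤ n → ∀ k, |a i k| ≤ W)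
    (hb : ∀ j, 1 ≤ j → j ≤ n → ∀ k, |b j k| ≤ W)
    (μ σ : ℕ → ℤ × ℤ × (Fin d → ℤ))
    (hμ0 : μ 0 = ((d : ℤ) * W, 0, 0))
    (hσtop : σ (2 * n + 1) = ((d : ℤ) * W, (d : ℤ) * W, 0))
    (hμa : ∀ i, 1 ≤ i → i ≤ n → μ i = (0, (d : ℤ) * W, a i))
    (hσa : ∀ i, 1 ≤ i → i ≤ n → σ i = (0, 0, 0))
    (hμb : ∀ j, 1 ≤ j → j ≤ n → μ (n + j) = (0, 0, 0))
    (hσb : ∀ j, 1 ≤ j → j ≤ n → σ (n + j) = ((d : ℤ) * W, 0, b j))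
    (T : ℕ → WithTop ℤ) (hT0 : T 0 = 0)
    (hT : ∀ j, 1 ≤ j → j ≤ 2 * n + 1 →
      T j = (Finset.range j).inf (fun i => T i + ((ip3 (μ i) (σ j) : ℤ) : WithTop ℤ))) :
    (∀ i, 1 ≤ i → i ≤ n → T i = 0) ∧
    (∀ j, (hj1 : 1 ≤ j) → j ≤ n →
      T (n + j) = ((Finset.Icc 1 n ×ˢ Finset.Icc 1 j).inf'
          ((Finset.nonempty_Icc.mpr hn).product (Finset.nonempty_Icc.mpr hj1))
          (fun p => dotInt (a p.1) (b p.2)) : ℤ)) := by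
  let w : ℕ → ℕ → WithTop ℤ := fun i j => (ip3 (μ i) (σ j) : ℤ)
  have table : IsLWSTable_s1 w (2 * n + 1) T := ⟨hT0, hT⟩
  have weight_left : ∀ i j, i < j → j ≤ n → w i j = 0 := fun i j hij hjn => by
    simp only [w, hσa j (by lia) hjn, ip3_zero_right, WithTop.coe_zero]
  have weight_right : ∀ k j, 1 ≤ k → k < j → j ≤ n → w (n + k) (n + j) = 0 :=
    fun k j hk hkj hjn => by simp only [w, hμb k hk (by lia), ip3_zero_left, WithTop.coe_zero]
  have weight_cross : ∀ i j, 1 ≤ i → i ≤ n → 1 ≤ j → j ≤ n →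
      w i (n + j) = dotInt (a i) (b j) := fun i j hi hin hj hjn => by
    simp [w, hμa i hi hin, hσb j hj hjn, ip3]
  have weight_zero : ∀ j, 1 ≤ j → j ≤ n → w 0 (n + j) = ((d * W) * (d * W) : ℤ) :=
    fun j hj hjn => by simp [w, hμ0, hσb j hj hjn, ip3, dotInt]
  have zero_dominated : ∀ j, 1 ≤ j → j ≤ n →
      ∃ i ∈ Finset.Icc 1 n, w i (n + j) ≤ w 0 (n + j) := fun j hj hjn => by
    refine ⟨1, Finset.mem_Icc.mpr ⟨le_rfl, hn⟩, ?_⟩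
    rw [weight_cross 1 j le_rfl hn hj hjn, weight_zero j hj hjn, WithTop.coe_le_coe]
    exact dotInt_le_mul_self (ha 1 le_rfl hn) (hb j hj hjn)
  have left_zero : ∀ i ≤ n, T i = 0 := fun i => table.apply_eq_zero (by lia) weight_left
  refine ⟨fun i _ => left_zero i, fun j hj hjn => ?_⟩
  rw [table.apply_add_eq_inf left_zero (by lia) weight_right zero_dominated hj hjn,
    Finset.coe_inf']
  refine Finset.inf_congr rfl fun p hp => ?_
  obtain ⟨⟨hi, hin⟩, hk, hkj⟩ := by simpa only [Finset.mem_product, Finset.mem_Icc] using hp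
  exact weight_cross p.1 p.2 hi hin hk (hkj.trans hjn)
end

section
/- Let d, W, n ≥ 1 and let a_1,…,a_n, b_1,…,b_n ∈ {−W,…,W}^d. Let O denote the all-zeros vector in ℤ^d and define vectors in ℤ^{d+2}: μ_0 = (dW, 0, O), σ_{2n+1} = (dW, dW, O), μ_i = (0, dW, a_i) and σ_i = (0, 0, O) for i = 1,…,n, and μ_{n+j} = (0, 0, O) and σ_{n+j} = (dW, 0, b_j) for j = 1,…,n. Let T be the LWS table on indices 0,…,2n+1 with weights w(i,j) = ⟨μ_i, σ_j⟩ for 0 ≤ i < j ≤ 2n+1. Then T[2n+1] = min_{1 ≤ i ≤ n, 1 ≤ j ≤ n} ⟨a_i, b_j⟩. -/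
/-! A weight that vanishes inside `{0,…,m}` and inside `{m+1,…,N}` makes every step free except the
single one crossing from the first block to the second, so `T[N]` is the cheapest crossing weight.
In the reduction `m = n` and `N = 2n+1`: the crossings `i → n + j` with `1 ≤ i, j ≤ n` cost
`⟨a_i, b_j⟩`, while those leaving `0` or entering `2n+1` cost `(dW)²`, which is at least every
`⟨a_i, b_j⟩`. -/

theorem inf_le_inf_of_forall_exists_le {ι κ α : Type*} [SemilatticeInf α] [OrderTop α]
    {s : Finset ι} {t : Finset κ} {f : ι → α} {g : κ → α}
    (h : ∀ y ∈ t, ∃ x ∈ s, f x ≤ g y) : s.inf f ≤ t.inf g :=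
  Finset.le_inf fun y hy =>
    let ⟨_, hx, hle⟩ := h y hy
    (Finset.inf_le hx).trans hle

/-- `T` is the least-weight-subsequence (LWS) table on the indices `0,…,N` for the weight `w`. Only
the values `T j` with `j ≤ N` and `w i j` with `i < j ≤ N` are constrained or used. -/
structure IsLWSTable_s2 {α : Type*} [AddZeroClass α] [SemilatticeInf α] [OrderTop α]
    (N : ℕ) (w : ℕ → ℕ → α) (T : ℕ → α) : Prop where
  zero : T 0 = 0
  eq_inf : ∀ j, 1 ≤ j → j ≤ N → T j = (Finset.range j).inf fun i => T i + w i j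

namespace IsLWSTable_s2

variable {α : Type*} [AddZeroClass α] [SemilatticeInf α] [OrderTop α]
  {N m : ℕ} {w : ℕ → ℕ → α} {T : ℕ → α}

theorem le_add (h : IsLWSTable_s2 N w T) {i j : ℕ} (hij : i < j) (hj : j ≤ N) :
    T j ≤ T i + w i j := by
  rw [h.eq_inf j (by lia) hj]
  exact Finset.inf_le (Finset.mem_range.mpr hij)

theorem eq_zero_of_weight_eq_zero (h : IsLWSTable_s2 N w T) (hm : m ≤ N)
    (hw : ∀ i j, i < j → j ≤ m → w i j = 0) {j : ℕ} (hj : j ≤ m) : T j = 0 := by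
  induction j using Nat.strong_induction_on with
  | _ j ih =>
    rcases Nat.eq_zero_or_pos j with rfl | hpos
    · exact h.zero
    have hterm : ∀ i ∈ Finset.range j, T i + w i j = 0 := fun i hi => by
      have hij := Finset.mem_range.mp hi
      rw [ih i hij (by lia), hw i j hij hj, add_zero]
    rw [h.eq_inf j hpos (by lia), Finset.inf_congr rfl hterm]
    exact Finset.inf_const (Finset.nonempty_range_iff.mpr hpos.ne') 0

theorem eq_inf_crossing (h : IsLWSTable_s2 N w T)
    (hleft : ∀ i j, i < j → j ≤ m → w i j = 0)
    (hright : ∀ i j, m < i → i < j → j ≤ N → w i j = 0) {k : ℕ} (hmk : m < k) (hk : k ≤ N) :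
    T k = (Finset.Iic m ×ˢ Finset.Ioc m k).inf fun p => w p.1 p.2 := by
  have hzero {i : ℕ} (hi : i ≤ m) : T i = 0 := h.eq_zero_of_weight_eq_zero (by lia) hleft hi
  apply le_antisymm
  · refine Finset.le_inf fun ⟨i, j⟩ hij => ?_
    simp only [Finset.mem_product, Finset.mem_Iic, Finset.mem_Ioc] at hij
    obtain ⟨him, hmj, hjk⟩ := hij
    have hTk : T k ≤ T j := by
      rcases hjk.eq_or_lt with rfl | hlt
      · exact le_rfl
      · simpa only [hright j k hmj hlt hk, add_zero] using h.le_add hlt hk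
    have hTj : T j ≤ w i j := by
      simpa only [hzero him, zero_add] using h.le_add (him.trans_lt hmj) (hjk.trans hk)
    exact hTk.trans hTj
  · induction k using Nat.strong_induction_on with
    | _ k ih =>
      rw [h.eq_inf k (by lia) hk]
      refine Finset.le_inf fun i hi => ?_
      have hik := Finset.mem_range.mp hi
      rcases le_or_gt i m with him | hmi
      · rw [hzero him, zero_add]
        exact Finset.inf_le (f := fun p : ℕ × ℕ => w p.1 p.2) (b := (i, k)) (by simp [him, hmk])
      · rw [hright i k hmi hik hk, add_zero]
        refine (Finset.inf_mono ?_).trans (ih i hik hmi (by lia))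
        exact Finset.product_subset_product_right (Finset.Ioc_subset_Ioc_right hik.le)

end IsLWSTable_s2

theorem dotInt_le_card_mul {d : ℕ} {A B : ℤ} {u v : Fin d → ℤ}
    (hu : ∀ k, |u k| ≤ A) (hv : ∀ k, |v k| ≤ B) : dotInt u v ≤ d * (A * B) := by
  have hterm : ∀ k ∈ Finset.univ, u k * v k ≤ A * B := fun k _ =>
    calc u k * v k ≤ |u k| * |v k| := (le_abs_self _).trans_eq (abs_mul _ _)
      _ ≤ A * B := mul_le_mul (hu k) (hv k) (abs_nonneg _) ((abs_nonneg _).trans (hu k))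
  simpa [dotInt] using Finset.sum_le_card_nsmul _ _ _ hterm

theorem dotInt_le_sq_card_mul {d : ℕ} {W : ℤ} {u v : Fin d → ℤ}
    (hu : ∀ k, |u k| ≤ W) (hv : ∀ k, |v k| ≤ W) : dotInt u v ≤ d * W * (d * W) :=
  calc dotInt u v ≤ d * (W * W) := dotInt_le_card_mul hu hv
    _ ≤ d * d * (W * W) :=
      mul_le_mul_of_nonneg_right (mod_cast Nat.le_mul_self d) (mul_self_nonneg W)
    _ = d * W * (d * W) := by ring

/-- The `LowRankLWS` vectors `μ_0,…,μ_{2n}` and `σ_1,…,σ_{2n+1}` built from `a_1,…,a_n` and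
`b_1,…,b_n`. The scalar `C` generalizes the `dW` of the paper: the steps from `0`, or to `2n+1`,
that cross from `{0,…,n}` to `{n+1,…,2n+1}` cost `C * C`. -/
structure IsLowRankReduction {d : ℕ} (C : ℤ) (n : ℕ) (a b : ℕ → Fin d → ℤ)
    (μ σ : ℕ → ℤ × ℤ × (Fin d → ℤ)) : Prop where
  μ_zero : μ 0 = (C, 0, 0)
  σ_top : σ (2 * n + 1) = (C, C, 0)
  μ_left : ∀ i, 1 ≤ i → i ≤ n → μ i = (0, C, a i)
  σ_left : ∀ i, 1 ≤ i → i ≤ n → σ i = (0, 0, 0)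
  μ_right : ∀ j, 1 ≤ j → j ≤ n → μ (n + j) = (0, 0, 0)
  σ_right : ∀ j, 1 ≤ j → j ≤ n → σ (n + j) = (C, 0, b j)

namespace IsLowRankReduction

variable {d n : ℕ} {C : ℤ} {a b : ℕ → Fin d → ℤ} {μ σ : ℕ → ℤ × ℤ × (Fin d → ℤ)} {i j : ℕ}

theorem ip3_eq_zero_of_right_le (h : IsLowRankReduction C n a b μ σ) (hij : i < j) (hj : j ≤ n) :
    ip3 (μ i) (σ j) = 0 := by
  simp [h.σ_left j (by lia) hj, ip3, dotInt]

theorem ip3_eq_zero_of_lt_left (h : IsLowRankReduction C n a b μ σ) (hi : n < i) (hin : i ≤ 2 * n) :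
    ip3 (μ i) (σ j) = 0 := by
  obtain ⟨i, rfl⟩ := Nat.exists_eq_add_of_le hi.le
  simp [h.μ_right i (by lia) (by lia), ip3, dotInt]

theorem ip3_eq_dotInt (h : IsLowRankReduction C n a b μ σ) (hi : 1 ≤ i) (hin : i ≤ n)
    (hj : 1 ≤ j) (hjn : j ≤ n) : ip3 (μ i) (σ (n + j)) = dotInt (a i) (b j) := by
  simp [h.μ_left i hi hin, h.σ_right j hj hjn, ip3]

theorem ip3_zero_left (h : IsLowRankReduction C n a b μ σ) (hnj : n < j) (hj : j ≤ 2 * n + 1) :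
    ip3 (μ 0) (σ j) = C * C := by
  rcases hj.eq_or_lt with rfl | hlt
  · simp [h.μ_zero, h.σ_top, ip3, dotInt]
  · obtain ⟨j, rfl⟩ := Nat.exists_eq_add_of_le hnj.le
    simp [h.μ_zero, h.σ_right j (by lia) (by lia), ip3, dotInt]

theorem ip3_top_right (h : IsLowRankReduction C n a b μ σ) (hin : i ≤ n) :
    ip3 (μ i) (σ (2 * n + 1)) = C * C := by
  rcases Nat.eq_zero_or_pos i with rfl | hi
  · exact h.ip3_zero_left (by lia) le_rfl
  · simp [h.μ_left i hi hin, h.σ_top, ip3, dotInt]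

theorem exists_dotInt_le_ip3 (h : IsLowRankReduction C n a b μ σ)
    (hC : ∃ p ∈ Finset.Icc 1 n ×ˢ Finset.Icc 1 n, dotInt (a p.1) (b p.2) ≤ C * C)
    (hin : i ≤ n) (hnj : n < j) (hj : j ≤ 2 * n + 1) :
    ∃ p ∈ Finset.Icc 1 n ×ˢ Finset.Icc 1 n, dotInt (a p.1) (b p.2) ≤ ip3 (μ i) (σ j) := by
  rcases Nat.eq_zero_or_pos i with rfl | hi
  · rwa [h.ip3_zero_left hnj hj]
  rcases hj.eq_or_lt with rfl | hlt
  · rwa [h.ip3_top_right hin]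
  obtain ⟨j, rfl⟩ := Nat.exists_eq_add_of_le hnj.le
  exact ⟨(i, j), by simp only [Finset.mem_product, Finset.mem_Icc]; lia,
    (h.ip3_eq_dotInt hi hin (by lia) (by lia)).ge⟩

theorem inf_crossing_eq_inf_dotInt (h : IsLowRankReduction C n a b μ σ)
    (hC : ∃ p ∈ Finset.Icc 1 n ×ˢ Finset.Icc 1 n, dotInt (a p.1) (b p.2) ≤ C * C) :
    ((Finset.Iic n ×ˢ Finset.Ioc n (2 * n + 1)).inf
        fun p => ((ip3 (μ p.1) (σ p.2) : ℤ) : WithTop ℤ)) =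
      (Finset.Icc 1 n ×ˢ Finset.Icc 1 n).inf
        fun p => ((dotInt (a p.1) (b p.2) : ℤ) : WithTop ℤ) := by
  apply le_antisymm <;> refine inf_le_inf_of_forall_exists_le fun ⟨i, j⟩ hij => ?_ <;>
    simp only [Finset.mem_product, Finset.mem_Icc, Finset.mem_Iic, Finset.mem_Ioc] at hij
  · obtain ⟨⟨hi, hin⟩, hj, hjn⟩ := hij
    exact ⟨(i, n + j), by simp only [Finset.mem_product, Finset.mem_Iic, Finset.mem_Ioc]; lia,
      mod_cast (h.ip3_eq_dotInt hi hin hj hjn).le⟩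
  · obtain ⟨hin, hnj, hj⟩ := hij
    exact mod_cast h.exists_dotInt_le_ip3 hC hin hnj hj

end IsLowRankReduction

theorem stmt_2_general {d n : ℕ} (hn : 1 ≤ n) {C : ℤ} {a b : ℕ → Fin d → ℤ}
    (hC : ∃ p ∈ Finset.Icc 1 n ×ˢ Finset.Icc 1 n, dotInt (a p.1) (b p.2) ≤ C * C)
    {μ σ : ℕ → ℤ × ℤ × (Fin d → ℤ)} (hμσ : IsLowRankReduction C n a b μ σ) {T : ℕ → WithTop ℤ}
    (hT : IsLWSTable_s2 (2 * n + 1) (fun i j => ((ip3 (μ i) (σ j) : ℤ) : WithTop ℤ)) T) :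
    T (2 * n + 1) = ((Finset.Icc 1 n ×ˢ Finset.Icc 1 n).inf'
        ((Finset.nonempty_Icc.mpr hn).product (Finset.nonempty_Icc.mpr hn))
        (fun p => dotInt (a p.1) (b p.2)) : ℤ) := by
  rw [Finset.coe_inf']
  exact (hT.eq_inf_crossing (fun i j hij hj => mod_cast hμσ.ip3_eq_zero_of_right_le hij hj)
    (fun i j hi hij hj => mod_cast hμσ.ip3_eq_zero_of_lt_left hi (by lia)) (by lia) le_rfl).trans
    (hμσ.inf_crossing_eq_inf_dotInt hC)

/-- In the reduction from `MinInnProd` to `LowRankLWS`, the LWS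
table on indices `0,…,2n+1` with weights `w(i,j) = ⟨μ_i, σ_j⟩` satisfies
`T[2n+1] = min_{1 ≤ i ≤ n, 1 ≤ j ≤ n} ⟨a_i, b_j⟩`. -/
theorem stmt_2 (d : ℕ) (hd : 1 ≤ d) (W : ℤ) (hW : 1 ≤ W) (n : ℕ) (hn : 1 ≤ n)
    (a b : ℕ → Fin d → ℤ)
    (ha : ∀ i, 1 ≤ i → i ≤ n → ∀ k, |a i k| ≤ W)
    (hb : ∀ j, 1 ≤ j → j ≤ n → ∀ k, |b j k| ≤ W)
    (μ σ : ℕ → ℤ × ℤ × (Fin d → ℤ))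
    (hμ0 : μ 0 = ((d : ℤ) * W, 0, 0))
    (hσtop : σ (2 * n + 1) = ((d : ℤ) * W, (d : ℤ) * W, 0))
    (hμa : ∀ i, 1 ≤ i → i ≤ n → μ i = (0, (d : ℤ) * W, a i))
    (hσa : ∀ i, 1 ≤ i → i ≤ n → σ i = (0, 0, 0))
    (hμb : ∀ j, 1 ≤ j → j ≤ n → μ (n + j) = (0, 0, 0))
    (hσb : ∀ j, 1 ≤ j → j ≤ n → σ (n + j) = ((d : ℤ) * W, 0, b j))
    (T : ℕ → WithTop ℤ) (hT0 : T 0 = 0)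
    (hT : ∀ j, 1 ≤ j → j ≤ 2 * n + 1 →
      T j = (Finset.range j).inf (fun i => T i + ((ip3 (μ i) (σ j) : ℤ) : WithTop ℤ))) :
    T (2 * n + 1) = ((Finset.Icc 1 n ×ˢ Finset.Icc 1 n).inf'
        ((Finset.nonempty_Icc.mpr hn).product (Finset.nonempty_Icc.mpr hn))
        (fun p => dotInt (a p.1) (b p.2)) : ℤ) := by
  have hone : 1 ∈ Finset.Icc 1 n := Finset.left_mem_Icc.mpr hn
  exact stmt_2_general hn
    ⟨(1, 1), Finset.mk_mem_product hone hone,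
      dotInt_le_sq_card_mul (ha 1 le_rfl hn) (hb 1 le_rfl hn)⟩
    ⟨hμ0, hσtop, hμa, hσa, hμb, hσb⟩ ⟨hT0, hT⟩
end

section
/- Let n, d ≥ 1 and let a_1,…,a_n, b_1,…,b_n ∈ ℤ^d. For i, j ∈ {1,…,n} define a′_i = (n·a_i, (i−1)·n, −1) ∈ ℤ^{d+2} and b′_j = (n·b_j, −1, j−1) ∈ ℤ^{d+2}. Then ⟨a′_i, b′_j⟩ = n²·⟨a_i, b_j⟩ − (i−1)·n − (j−1), and for every r ∈ ℤ and every pair i, j ∈ {1,…,n}: ⟨a′_i, b′_j⟩ ≤ r·n² if and only if ⟨a_i, b_j⟩ ≤ r. -/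
/-- Standard inner product on `ℤ^{d+2}`, viewing a vector as a vector in `ℤ^d`
followed by two scalar coordinates. -/
def ipVec2 {d : ℕ} (u v : (Fin d → ℤ) × ℤ × ℤ) : ℤ :=
  dotInt u.1 v.1 + u.2.1 * v.2.1 + u.2.2 * v.2.2

/-!
Expanding the inner product gives `⟨a′_i, b′_j⟩ = n²·⟨a_i, b_j⟩ − e` with `e = (i−1)·n + (j−1)`.
Since `i − 1` and `j − 1` are base-`n` digits, `0 ≤ e < n²`, so subtracting `e` from a multiple
of `n²` never reaches the next lower multiple.
-/

theorem dotInt_mul_mul {d : ℕ} (c c' : ℤ) (u v : Fin d → ℤ) :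
    dotInt (fun k => c * u k) (fun k => c' * v k) = c * c' * dotInt u v := by
  simp only [dotInt, Finset.mul_sum, mul_mul_mul_comm]

theorem ipVec2_mul_neg_one {d : ℕ} (c c' s t : ℤ) (u v : Fin d → ℤ) :
    ipVec2 (fun k => c * u k, s, -1) (fun k => c' * v k, -1, t)
      = c * c' * dotInt u v - s - t := by
  simp only [ipVec2, dotInt_mul_mul]
  ring

theorem mul_sub_le_mul_iff_of_nonneg_of_lt {m e : ℤ} (he : 0 ≤ e) (hem : e < m) (x r : ℤ) :
    m * x - e ≤ r * m ↔ x ≤ r := by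
  have hm : 0 < m := he.trans_lt hem
  have floor_eq : (r * m + e) / m = r := by
    rw [Int.mul_add_ediv_right _ _ hm.ne', Int.ediv_eq_zero_of_lt he hem, add_zero]
  rw [sub_le_iff_le_add, mul_comm m x, ← Int.le_ediv_iff_mul_le hm, floor_eq]

theorem mul_add_lt_mul_of_lt_of_lt {m n s t : ℤ} (hn : 0 ≤ n) (hs : s < m) (ht : t < n) :
    s * n + t < m * n :=
  calc
    s * n + t < s * n + n := by gcongr
    _ = (s + 1) * n := (add_one_mul s n).symm
    _ ≤ m * n := mul_le_mul_of_nonneg_right (Int.add_one_le_of_lt hs) hn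

/-- For `a′_i = (n·a_i, (i−1)·n, −1)` and `b′_j = (n·b_j, −1, j−1)`
in `ℤ^{d+2}`, we have `⟨a′_i, b′_j⟩ = n²·⟨a_i, b_j⟩ − (i−1)·n − (j−1)`, and for
every `r ∈ ℤ`: `⟨a′_i, b′_j⟩ ≤ r·n²` iff `⟨a_i, b_j⟩ ≤ r`. -/
theorem stmt_4 (n d : ℕ) (hn : 1 ≤ n) (hd : 1 ≤ d)
    (a b : ℕ → Fin d → ℤ)
    (a' b' : ℕ → (Fin d → ℤ) × ℤ × ℤ)
    (ha' : ∀ i, 1 ≤ i → i ≤ n →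
      a' i = (fun k => (n : ℤ) * a i k, ((i : ℤ) - 1) * (n : ℤ), -1))
    (hb' : ∀ j, 1 ≤ j → j ≤ n →
      b' j = (fun k => (n : ℤ) * b j k, -1, (j : ℤ) - 1)) :
    ∀ i j, 1 ≤ i → i ≤ n → 1 ≤ j → j ≤ n →
      (ipVec2 (a' i) (b' j)
          = (n : ℤ) ^ 2 * dotInt (a i) (b j) - ((i : ℤ) - 1) * (n : ℤ) - ((j : ℤ) - 1)) ∧
      (∀ r : ℤ, ipVec2 (a' i) (b' j) ≤ r * (n : ℤ) ^ 2 ↔ dotInt (a i) (b j) ≤ r) := by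
  intro i j hi hin hj hjn
  have ip_eq : ipVec2 (a' i) (b' j)
      = (n : ℤ) ^ 2 * dotInt (a i) (b j) - ((i : ℤ) - 1) * (n : ℤ) - ((j : ℤ) - 1) := by
    rw [ha' i hi hin, hb' j hj hjn, ipVec2_mul_neg_one, sq]
  refine ⟨ip_eq, fun r => ?_⟩
  have offset_nonneg : 0 ≤ ((i : ℤ) - 1) * n + ((j : ℤ) - 1) :=
    add_nonneg (mul_nonneg (by lia) (by lia)) (by lia)
  have offset_lt : ((i : ℤ) - 1) * n + ((j : ℤ) - 1) < (n : ℤ) ^ 2 := by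
    rw [sq]
    exact mul_add_lt_mul_of_lt_of_lt (by lia) (by lia) (by lia)
  rw [ip_eq, sub_sub, mul_sub_le_mul_iff_of_nonneg_of_lt offset_nonneg offset_lt]
end

section
/- Let n ≥ 1, W ≥ 0, and M = 2W+1. Let a = (a_0,…,a_{n−1}) and b = (b_0,…,b_{n−1}) be integer vectors with 2M ≤ a_i ≤ 3M and 0 ≤ b_i ≤ M for all i. Define coin weights w_1,…,w_{6n} by: w_i = 4M for 1 ≤ i ≤ n; w_{n+i} = a_{n−i} for 1 ≤ i ≤ n; w_{2n+i} = 4M for 1 ≤ i ≤ n; w_{3n+i} = b_{n−i} for 1 ≤ i ≤ n; and w_i = 4M for 4n < i ≤ 6n. Let T be the coin-change table for these weights on indices 0,…,6n. Then: T[i] = 4M for 1 ≤ i ≤ n; T[n+i] = a_{n−i} for 1 ≤ i ≤ n; T[2n+i] = 4M for 1 ≤ i ≤ n; and T[3n+i] = b_{n−i} for 1 ≤ i ≤ n. -/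
/-!
A coin-change table agrees with its weights as long as the weights are subadditive, since then
buying a single coin is always optimal. For the block weights of the reduction, with `C = 4M`, every
weight is at most `C`, so it is enough that two coins of total size at most `4n` cost at least `C`.
If both have size at most `3n`, each costs at least `2M`. Otherwise one has size greater than `3n`,
hence nonnegative weight, and the other has size less than `n`, hence weight exactly `C`.
-/

section Table

variable {R : Type*} [SemilatticeInf R] [AddZeroClass R] {N : ℕ} {w T : ℕ → R}

/-- `T` is the coin-change table of the coin weights `w` on the indices `0, …, N`; the values of
`w` and `T` at other indices, and `w 0`, are irrelevant. -/
structure IsCoinChangeTable (N : ℕ) (w T : ℕ → R) : Prop where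
  zero : T 0 = 0
  eq_inf' (j : ℕ) (hj : 1 ≤ j) (hjN : j ≤ N) :
    T j = (Finset.Icc 1 j).inf' (Finset.nonempty_Icc.mpr hj) (fun k ↦ T (j - k) + w k)

theorem IsCoinChangeTable.eq_weight_of_subadditive (hT : IsCoinChangeTable N w T)
    (hw : ∀ i k, 1 ≤ i → 1 ≤ k → i + k ≤ N → w (i + k) ≤ w i + w k)
    (j : ℕ) (hj : 1 ≤ j) (hjN : j ≤ N) : T j = w j := by
  induction j using Nat.strong_induction_on with
  | _ j ih =>
    have single_coin : T (j - j) + w j = w j := by rw [Nat.sub_self, hT.zero, zero_add]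
    rw [hT.eq_inf' j hj hjN]
    apply le_antisymm
    · exact (Finset.inf'_le _ (Finset.right_mem_Icc.mpr hj)).trans_eq single_coin
    · refine Finset.le_inf' _ _ fun k hk ↦ ?_
      obtain ⟨hk, hkj⟩ := Finset.mem_Icc.mp hk
      obtain rfl | hkj := hkj.eq_or_lt
      · exact single_coin.ge
      · rw [ih (j - k) (by lia) (by lia) (by lia)]
        simpa only [Nat.sub_add_cancel hkj.le] using hw (j - k) k (by lia) hk (by lia)

end Table

section Blocks

variable {R : Type*} {n : ℕ} {C : R} {a b f : ℕ → R}

/-- The values `f 1, …, f (4n)` are the concatenation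
`Cⁿ ∘ (a_{n−1}, …, a_0) ∘ Cⁿ ∘ (b_{n−1}, …, b_0)`, the form of the coin weights in the reduction
from `(min,+)`-convolution. -/
structure IsBlockSequence (n : ℕ) (C : R) (a b f : ℕ → R) : Prop where
  first (i : ℕ) (hi : 1 ≤ i) (hin : i ≤ n) : f i = C
  second (i : ℕ) (hi : 1 ≤ i) (hin : i ≤ n) : f (n + i) = a (n - i)
  third (i : ℕ) (hi : 1 ≤ i) (hin : i ≤ n) : f (2 * n + i) = C
  fourth (i : ℕ) (hi : 1 ≤ i) (hin : i ≤ n) : f (3 * n + i) = b (n - i)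

namespace IsBlockSequence

theorem congr {g : ℕ → R} (hf : IsBlockSequence n C a b f)
    (hfg : ∀ j, 1 ≤ j → j ≤ 4 * n → g j = f j) : IsBlockSequence n C a b g where
  first i hi hin := (hfg _ (by lia) (by lia)).trans (hf.first i hi hin)
  second i hi hin := (hfg _ (by lia) (by lia)).trans (hf.second i hi hin)
  third i hi hin := (hfg _ (by lia) (by lia)).trans (hf.third i hi hin)
  fourth i hi hin := (hfg _ (by lia) (by lia)).trans (hf.fourth i hi hin)

theorem eq_or_exists_eq_of_le_three_mul (hf : IsBlockSequence n C a b f) {j : ℕ} (hj : 1 ≤ j)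
    (hjn : j ≤ 3 * n) : f j = C ∨ ∃ i < n, f j = a i := by
  obtain hjn₁ | hjn₁ := le_or_gt j n
  · exact .inl (hf.first j hj hjn₁)
  obtain hjn₂ | hjn₂ := le_or_gt j (2 * n)
  · obtain ⟨i, rfl⟩ := Nat.exists_eq_add_of_le hjn₁.le
    exact .inr ⟨n - i, by lia, hf.second i (by lia) (by lia)⟩
  · obtain ⟨i, rfl⟩ := Nat.exists_eq_add_of_le hjn₂.le
    exact .inl (hf.third i (by lia) (by lia))

theorem exists_eq_of_three_mul_lt (hf : IsBlockSequence n C a b f) {j : ℕ} (hj : 3 * n < j)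
    (hjn : j ≤ 4 * n) : ∃ i < n, f j = b i := by
  obtain ⟨i, rfl⟩ := Nat.exists_eq_add_of_le hj.le
  exact ⟨n - i, by lia, hf.fourth i (by lia) (by lia)⟩

theorem apply_le [Preorder R] (hf : IsBlockSequence n C a b f) (ha : ∀ i < n, a i ≤ C)
    (hb : ∀ i < n, b i ≤ C) {j : ℕ} (hj : 1 ≤ j) (hjn : j ≤ 4 * n) : f j ≤ C := by
  obtain hjn₃ | hjn₃ := le_or_gt j (3 * n)
  · obtain h | ⟨i, hi, h⟩ := hf.eq_or_exists_eq_of_le_three_mul hj hjn₃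
    · exact h.le
    · exact h.trans_le (ha i hi)
  · obtain ⟨i, hi, h⟩ := hf.exists_eq_of_three_mul_lt hjn₃ hjn
    exact h.trans_le (hb i hi)

theorem le_apply_of_le_three_mul [Preorder R] {c : R} (hf : IsBlockSequence n C a b f)
    (ha : ∀ i < n, c ≤ a i ∧ a i ≤ C) {j : ℕ} (hj : 1 ≤ j) (hjn : j ≤ 3 * n) : c ≤ f j := by
  obtain h | ⟨i, hi, h⟩ := hf.eq_or_exists_eq_of_le_three_mul hj hjn
  · obtain ⟨hca, haC⟩ := ha 0 (by lia)
    exact (hca.trans haC).trans_eq h.symm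
  · exact (ha i hi).1.trans_eq h.symm

variable [Preorder R] [AddZeroClass R] [AddLeftMono R] [AddRightMono R] {c : R}

theorem le_add (hf : IsBlockSequence n C a b f) (hC : C ≤ c + c)
    (ha : ∀ i < n, c ≤ a i ∧ a i ≤ C) (hb : ∀ i < n, 0 ≤ b i) {i k : ℕ} (hi : 1 ≤ i) (hk : 1 ≤ k)
    (hik : i + k ≤ 4 * n) : C ≤ f i + f k := by
  have nonneg {j : ℕ} (hj : 3 * n < j) (hjn : j ≤ 4 * n) : 0 ≤ f j := by
    obtain ⟨l, hl, h⟩ := hf.exists_eq_of_three_mul_lt hj hjn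
    exact (hb l hl).trans_eq h.symm
  obtain hkn | hkn := le_or_gt k (3 * n)
  · obtain hin | hin := le_or_gt i (3 * n)
    · calc
        C ≤ c + c := hC
        _ ≤ f i + f k := add_le_add (hf.le_apply_of_le_three_mul ha hi hin)
          (hf.le_apply_of_le_three_mul ha hk hkn)
    · rw [hf.first k hk (by lia)]
      exact le_add_of_nonneg_left (nonneg hin (by lia))
  · rw [hf.first i hi (by lia)]
    exact le_add_of_nonneg_right (nonneg hkn (by lia))

theorem subadditive (hf : IsBlockSequence n C a b f) (hC : C ≤ c + c)
    (ha : ∀ i < n, c ≤ a i ∧ a i ≤ C) (hb : ∀ i < n, 0 ≤ b i ∧ b i ≤ C) (i k : ℕ) (hi : 1 ≤ i)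
    (hk : 1 ≤ k) (hik : i + k ≤ 4 * n) : f (i + k) ≤ f i + f k :=
  calc
    f (i + k) ≤ C :=
      hf.apply_le (fun l hl ↦ (ha l hl).2) (fun l hl ↦ (hb l hl).2) (by lia) hik
    _ ≤ f i + f k := hf.le_add hC ha (fun l hl ↦ (hb l hl).1) hi hk hik

end IsBlockSequence

end Blocks

theorem stmt_6_general {R : Type*} [SemilatticeInf R] [AddZeroClass R] [AddLeftMono R]
    [AddRightMono R] {n : ℕ} {c C : R} (hC : C ≤ c + c) {a b w T : ℕ → R}
    (ha : ∀ i < n, c ≤ a i ∧ a i ≤ C) (hb : ∀ i < n, 0 ≤ b i ∧ b i ≤ C)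
    (hw : IsBlockSequence n C a b w) (hT : IsCoinChangeTable (4 * n) w T) :
    IsBlockSequence n C a b T :=
  hw.congr (hT.eq_weight_of_subadditive (hw.subadditive hC ha hb))

/-- In the reduction from `(min,+)`-convolution to the coin change
problem, with `M = 2W+1`, `2M ≤ a_i ≤ 3M`, `0 ≤ b_i ≤ M`, and the coin weights
`w = (4M)^n ∘ (a_{n−1},…,a_0) ∘ (4M)^n ∘ (b_{n−1},…,b_0) ∘ (4M)^{2n}`, the
coin-change table `T` (with `T[0] = 0` and `T[j] = min_{1≤k≤j} (T[j−k] + w_k)`)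
satisfies `T[i] = 4M`, `T[n+i] = a_{n−i}`, `T[2n+i] = 4M`, and
`T[3n+i] = b_{n−i}` for all `1 ≤ i ≤ n`. -/
theorem stmt_6 (n : ℕ) (hn : 1 ≤ n) (W M : ℤ) (hW : 0 ≤ W) (hM : M = 2 * W + 1)
    (a b : ℕ → ℤ)
    (ha : ∀ i, i < n → 2 * M ≤ a i ∧ a i ≤ 3 * M)
    (hb : ∀ i, i < n → 0 ≤ b i ∧ b i ≤ M)
    (w : ℕ → ℤ)
    (hw1 : ∀ i, 1 ≤ i → i ≤ n → w i = 4 * M)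
    (hw2 : ∀ i, 1 ≤ i → i ≤ n → w (n + i) = a (n - i))
    (hw3 : ∀ i, 1 ≤ i → i ≤ n → w (2 * n + i) = 4 * M)
    (hw4 : ∀ i, 1 ≤ i → i ≤ n → w (3 * n + i) = b (n - i))
    (hw5 : ∀ i, 4 * n < i → i ≤ 6 * n → w i = 4 * M)
    (T : ℕ → ℤ) (hT0 : T 0 = 0)
    (hT : ∀ j, (hj : 1 ≤ j) → j ≤ 6 * n →
      T j = (Finset.Icc 1 j).inf' (Finset.nonempty_Icc.mpr hj)
        (fun k => T (j - k) + w k)) :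
    (∀ i, 1 ≤ i → i ≤ n → T i = 4 * M) ∧
    (∀ i, 1 ≤ i → i ≤ n → T (n + i) = a (n - i)) ∧
    (∀ i, 1 ≤ i → i ≤ n → T (2 * n + i) = 4 * M) ∧
    (∀ i, 1 ≤ i → i ≤ n → T (3 * n + i) = b (n - i)) := by
  obtain ⟨first, second, third, fourth⟩ := stmt_6_general (c := 2 * M) (by lia)
    (fun i hi ↦ ⟨(ha i hi).1, by linarith [ha i hi]⟩)
    (fun i hi ↦ ⟨(hb i hi).1, by linarith [hb i hi]⟩)
    ⟨hw1, hw2, hw3, hw4⟩ ⟨hT0, fun j hj hjn ↦ hT j hj (by lia)⟩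
  exact ⟨first, second, third, fourth⟩
end

section
/- Let n ≥ 1, W ≥ 0, and M = 2W+1. Let a = (a_0,…,a_{n−1}) and b = (b_0,…,b_{n−1}) be integer vectors with 2M ≤ a_i ≤ 3M and 0 ≤ b_i ≤ M for all i. Define coin weights w_1,…,w_{6n} by: w_i = 4M for 1 ≤ i ≤ n; w_{n+i} = a_{n−i} for 1 ≤ i ≤ n; w_{2n+i} = 4M for 1 ≤ i ≤ n; w_{3n+i} = b_{n−i} for 1 ≤ i ≤ n; and w_i = 4M for 4n < i ≤ 6n. Let T be the coin-change table for these weights on indices 0,…,6n. Additionally set (a∗b)_{2n−1} := 4M. Then T[4n+i] = (a∗b)_{2n−i} for all i with 1 ≤ i ≤ 2n. -/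
/-- The `(min,+)`-convolution of two vectors of length `n` (entries indexed by
`0,…,n−1`), valued in `WithTop ℤ`:
`(a∗b)_k = min_{0 ≤ i,j ≤ n−1, i+j=k} (a_i + b_j)`
(the minimum over the empty set being `⊤`, which does not occur for
`0 ≤ k ≤ 2n−2`). -/
def minPlusConv (n : ℕ) (a b : ℕ → ℤ) (k : ℕ) : WithTop ℤ :=
  (((Finset.range n) ×ˢ (Finset.range n)).filter (fun p => p.1 + p.2 = k)).inf
    (fun p => ((a p.1 + b p.2 : ℤ) : WithTop ℤ))

/-! Call the coins `3n+1, …, 4n`, which carry `b`, light and all others heavy. Two heavy coins cost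
at least `C` (the paper's `4M`) together, and two light coins have total size above `6n`. So a
representation of some `j ≤ 6n` by at least two coins costs at least `C` unless it consists of one
heavy and one light coin, and then too unless the heavy coin carries a weight from `a`. Such an
exceptional pair has total size above `4n`, whence `T = w` on `1, …, 4n`, while `T (4n + i)` is the
minimum of `C` and of the sums `a x + b y` with `x + y = 2n - i`. -/

section Definitions

variable {R : Type*}

/-- `T 0, …, T m` is the coin-change table of the weights `w 1, …, w m`. -/
structure IsCoinChangeTable_s7 [AddMonoid R] [LinearOrder R] (m : ℕ) (w T : ℕ → R) : Prop where
  zero : T 0 = 0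
  eq_inf' : ∀ j, (hj : 1 ≤ j) → j ≤ m →
    T j = (Finset.Icc 1 j).inf' (Finset.nonempty_Icc.mpr hj) (fun k => T (j - k) + w k)

/-- The sums `a x + b y` with `x, y < n` and `x + y = k`, whose minimum is the `k`-th entry of the
`(min,+)`-convolution of `a` and `b`. -/
def minPlusSums [Add R] (n : ℕ) (a b : ℕ → R) (k : ℕ) : Set R :=
  {s | ∃ x y, x < n ∧ y < n ∧ x + y = k ∧ a x + b y = s}

/-- `w 1, …, w (6n)` are the coin weights `C^n ∘ aʳ ∘ C^n ∘ bʳ ∘ C^(2n)` (where `ʳ` is reversal)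
encoding the `(min,+)`-convolution of `a` and `b`. The range conditions `2M ≤ a ≤ 3M`, `0 ≤ b ≤ M`
for `C = 4M` are weakened to the inequalities between sums that they are meant to ensure. -/
structure IsConvolutionWeights [AddMonoid R] [LE R] (n : ℕ) (C : R) (a b w : ℕ → R) : Prop where
  left_nonneg : ∀ x < n, 0 ≤ a x
  right_nonneg : ∀ y < n, 0 ≤ b y
  const_le_left_add_left : ∀ x < n, ∀ x' < n, C ≤ a x + a x'
  left_add_right_le_const : ∀ x < n, ∀ y < n, a x + b y ≤ C
  first_const : ∀ i, 1 ≤ i → i ≤ n → w i = C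
  left_block : ∀ i, 1 ≤ i → i ≤ n → w (n + i) = a (n - i)
  middle_const : ∀ i, 1 ≤ i → i ≤ n → w (2 * n + i) = C
  right_block : ∀ i, 1 ≤ i → i ≤ n → w (3 * n + i) = b (n - i)
  last_const : ∀ i, 4 * n < i → i ≤ 6 * n → w i = C

end Definitions

theorem minPlusConv_eq_coe_of_isLeast {n k : ℕ} {a b : ℕ → ℤ} {s : ℤ}
    (h : IsLeast (minPlusSums n a b k) s) : minPlusConv n a b k = s := by
  obtain ⟨⟨x, y, hx, hy, hxy, hs⟩, hle⟩ := h
  apply le_antisymm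
  · rw [← hs]
    exact Finset.inf_le (b := (x, y))
      (f := fun p : ℕ × ℕ => ((a p.1 + b p.2 : ℤ) : WithTop ℤ)) (by simp [hx, hy, hxy])
  · refine Finset.le_inf fun p hp => WithTop.coe_le_coe.mpr (hle ?_)
    simp only [Finset.mem_filter, Finset.mem_product, Finset.mem_range] at hp
    exact ⟨p.1, p.2, hp.1.1, hp.1.2, hp.2, rfl⟩

namespace IsCoinChangeTable_s7

section AddMonoid

variable {R : Type*} [AddMonoid R] [LinearOrder R] {m : ℕ} {w T : ℕ → R}

theorem le_add (hT : IsCoinChangeTable_s7 m w T) {r k : ℕ} (hk : 1 ≤ k) (hrk : r + k ≤ m) :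
    T (r + k) ≤ T r + w k := by
  rw [hT.eq_inf' (r + k) (by omega) hrk]
  exact (Finset.inf'_le _ (Finset.mem_Icc.mpr ⟨hk, by omega⟩)).trans_eq
    (by rw [Nat.add_sub_cancel])

theorem exists_eq_add (hT : IsCoinChangeTable_s7 m w T) {j : ℕ} (hj : 1 ≤ j) (hjm : j ≤ m) :
    ∃ r k, 1 ≤ k ∧ r + k = j ∧ T j = T r + w k := by
  obtain ⟨k, hk, heq⟩ := Finset.exists_mem_eq_inf' (Finset.nonempty_Icc.mpr hj)
    (fun k => T (j - k) + w k)
  rw [Finset.mem_Icc] at hk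
  exact ⟨j - k, k, hk.1, Nat.sub_add_cancel hk.2, (hT.eq_inf' j hj hjm).trans heq⟩

theorem le_weight (hT : IsCoinChangeTable_s7 m w T) {j : ℕ} (hj : 1 ≤ j) (hjm : j ≤ m) :
    T j ≤ w j := by
  simpa only [Nat.zero_add, hT.zero, zero_add] using
    hT.le_add (r := 0) hj ((Nat.zero_add j).trans_le hjm)

theorem eq_weight_of_subadditive_s7 (hT : IsCoinChangeTable_s7 m w T) {l : ℕ} (hlm : l ≤ m)
    (hw : ∀ j k, 1 ≤ j → 1 ≤ k → j + k ≤ l → w (j + k) ≤ w j + w k) {j : ℕ} (hj : 1 ≤ j)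
    (hjl : j ≤ l) : T j = w j := by
  induction j using Nat.strong_induction_on with
  | _ j ih =>
    refine (hT.le_weight hj (hjl.trans hlm)).antisymm ?_
    obtain ⟨r, k, hk, rfl, heq⟩ := hT.exists_eq_add hj (hjl.trans hlm)
    rcases Nat.eq_zero_or_pos r with rfl | hr
    · rw [heq, hT.zero, zero_add, zero_add]
    · rw [heq, ih r (by omega) hr (by omega)]
      exact hw r k hr hk hjl

end AddMonoid

section OrderedAddCommMonoid

variable {R : Type*} [AddCommMonoid R] [LinearOrder R] [IsOrderedAddMonoid R] {m : ℕ}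
  {w T : ℕ → R}

theorem nonneg (hT : IsCoinChangeTable_s7 m w T) (hw : ∀ k, 1 ≤ k → k ≤ m → 0 ≤ w k) {j : ℕ}
    (hjm : j ≤ m) : 0 ≤ T j := by
  induction j using Nat.strong_induction_on with
  | _ j ih =>
    rcases Nat.eq_zero_or_pos j with rfl | hj
    · exact hT.zero.ge
    · obtain ⟨r, k, hk, rfl, heq⟩ := hT.exists_eq_add hj hjm
      rw [heq]
      exact add_nonneg (ih r (by omega) (by omega)) (hw k hk (by omega))

theorem le_weight_add_weight (hT : IsCoinChangeTable_s7 m w T) {j k : ℕ} (hj : 1 ≤ j) (hk : 1 ≤ k)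
    (hjk : j + k ≤ m) : T (j + k) ≤ w j + w k :=
  (hT.le_add hk hjk).trans (by gcongr; exact hT.le_weight hj (by omega))

end OrderedAddCommMonoid

end IsCoinChangeTable_s7

namespace IsConvolutionWeights

section Weights

variable {R : Type*} [AddMonoid R] [LE R] {n : ℕ} {C : R} {a b w : ℕ → R}

theorem weight_eq_left (hw : IsConvolutionWeights n C a b w) {x k : ℕ} (hx : x < n)
    (hk : k + x = 2 * n) : w k = a x := by
  obtain rfl : k = n + (n - x) := by omega
  rw [hw.left_block _ (by omega) (by omega), Nat.sub_sub_self hx.le]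

theorem weight_eq_right (hw : IsConvolutionWeights n C a b w) {y k : ℕ} (hy : y < n)
    (hk : k + y = 4 * n) : w k = b y := by
  obtain rfl : k = 3 * n + (n - y) := by omega
  rw [hw.right_block _ (by omega) (by omega), Nat.sub_sub_self hy.le]

theorem weight_cases (hw : IsConvolutionWeights n C a b w) {k : ℕ} (hk : 1 ≤ k)
    (hkn : k ≤ 6 * n) :
    w k = C ∨ (∃ x < n, k + x = 2 * n ∧ w k = a x) ∨ ∃ y < n, k + y = 4 * n ∧ w k = b y := by
  obtain h | h | h | h | h : k ≤ n ∨ (n < k ∧ k ≤ 2 * n) ∨ (2 * n < k ∧ k ≤ 3 * n) ∨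
      (3 * n < k ∧ k ≤ 4 * n) ∨ 4 * n < k := by omega
  · exact .inl (hw.first_const k hk h)
  · exact .inr (.inl ⟨2 * n - k, by omega, by omega, hw.weight_eq_left (by omega) (by omega)⟩)
  · obtain ⟨i, rfl⟩ := Nat.exists_eq_add_of_le h.1.le
    exact .inl (hw.middle_const i (by omega) (by omega))
  · exact .inr (.inr ⟨4 * n - k, by omega, by omega, hw.weight_eq_right (by omega) (by omega)⟩)
  · exact .inl (hw.last_const k h hkn)

theorem le_const_of_mem_minPlusSums (hw : IsConvolutionWeights n C a b w) {s : ℕ} {c : R}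
    (hc : c ∈ minPlusSums n a b s) : c ≤ C := by
  obtain ⟨x, y, hx, hy, -, rfl⟩ := hc
  exact hw.left_add_right_le_const x hx y hy

end Weights

variable {R : Type*} [AddCommMonoid R] [LinearOrder R] [IsOrderedAddMonoid R] {n : ℕ} {C : R}
  {a b w T : ℕ → R}

theorem const_nonneg (hw : IsConvolutionWeights n C a b w) (hn : 1 ≤ n) : 0 ≤ C :=
  (add_nonneg (hw.left_nonneg 0 hn) (hw.right_nonneg 0 hn)).trans
    (hw.left_add_right_le_const 0 hn 0 hn)

theorem weight_nonneg (hw : IsConvolutionWeights n C a b w) {k : ℕ} (hk : 1 ≤ k)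
    (hkn : k ≤ 6 * n) : 0 ≤ w k := by
  rcases hw.weight_cases hk hkn with h | ⟨x, hx, -, h⟩ | ⟨y, hy, -, h⟩ <;> rw [h]
  exacts [hw.const_nonneg (by omega), hw.left_nonneg x hx, hw.right_nonneg y hy]

theorem weight_le_const (hw : IsConvolutionWeights n C a b w) {k : ℕ} (hk : 1 ≤ k)
    (hkn : k ≤ 6 * n) : w k ≤ C := by
  rcases hw.weight_cases hk hkn with h | ⟨x, hx, -, h⟩ | ⟨y, hy, -, h⟩
  · exact h.le
  · rw [h]
    exact (le_add_of_nonneg_right (hw.right_nonneg x hx)).trans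
      (hw.left_add_right_le_const x hx x hx)
  · rw [h]
    exact (le_add_of_nonneg_left (hw.left_nonneg y hy)).trans
      (hw.left_add_right_le_const y hy y hy)

theorem const_le_weight_add_weight_or_mem_minPlusSums (hw : IsConvolutionWeights n C a b w)
    {j k s : ℕ} (hj : 1 ≤ j) (hk : 1 ≤ k) (hjks : j + k + s = 6 * n) :
    C ≤ w j + w k ∨ w j + w k ∈ minPlusSums n a b s := by
  wlog hjk : j ≤ k generalizing j k
  · rw [add_comm (w j)]
    exact this hk hj (by omega) (by omega)
  rcases hw.weight_cases hj (by omega) with hjC | ⟨x, hx, hjx, hja⟩ | ⟨y, hy, hjy, -⟩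
  · exact .inl (hjC ▸ le_add_of_nonneg_right (hw.weight_nonneg hk (by omega)))
  · rcases hw.weight_cases hk (by omega) with hkC | ⟨x', hx', -, hka⟩ | ⟨y, hy, hky, hkb⟩
    · exact .inl (hkC ▸ le_add_of_nonneg_left (hw.weight_nonneg hj (by omega)))
    · exact .inl (by rw [hja, hka]; exact hw.const_le_left_add_left x hx x' hx')
    · exact .inr ⟨x, y, hx, hy, by omega, by rw [hja, hkb]⟩
  · omega

theorem const_le_weight_add_weight (hw : IsConvolutionWeights n C a b w) {j k : ℕ} (hj : 1 ≤ j)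
    (hjn : j ≤ 6 * n) (hj_heavy : j ≤ 3 * n ∨ 4 * n < j) (hk : 1 ≤ k) (hkn : k ≤ 6 * n)
    (hk_heavy : k ≤ 3 * n ∨ 4 * n < k) : C ≤ w j + w k := by
  rcases hw.weight_cases hj hjn with hjC | ⟨x, hx, -, hja⟩ | ⟨y, hy, hjy, -⟩
  · exact hjC ▸ le_add_of_nonneg_right (hw.weight_nonneg hk hkn)
  · rcases hw.weight_cases hk hkn with hkC | ⟨x', hx', -, hka⟩ | ⟨y, hy, hky, -⟩
    · exact hkC ▸ le_add_of_nonneg_left (hw.weight_nonneg hj hjn)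
    · rw [hja, hka]
      exact hw.const_le_left_add_left x hx x' hx'
    · omega
  · omega

theorem table_eq_weight (hw : IsConvolutionWeights n C a b w)
    (hT : IsCoinChangeTable_s7 (6 * n) w T) {j : ℕ} (hj : 1 ≤ j) (hjn : j ≤ 4 * n) : T j = w j := by
  refine hT.eq_weight_of_subadditive_s7 (l := 4 * n) (by omega) (fun i k hi hk hik => ?_) hj hjn
  rcases hw.const_le_weight_add_weight_or_mem_minPlusSums (s := 6 * n - (i + k)) hi hk (by omega)
    with hC | ⟨x, y, hx, hy, hxy, -⟩
  · exact (hw.weight_le_const (by omega) (by omega)).trans hC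
  · omega

theorem const_le_table_add_weight (hw : IsConvolutionWeights n C a b w)
    (hT : IsCoinChangeTable_s7 (6 * n) w T) {j k : ℕ} (hj : 1 ≤ j) (hjn : j ≤ 6 * n)
    (hj_heavy : j ≤ 3 * n ∨ 4 * n < j) (hk : 1 ≤ k) (hkn : k ≤ 6 * n)
    (hk_heavy : k ≤ 3 * n ∨ 4 * n < k) : C ≤ T j + w k := by
  induction j using Nat.strong_induction_on with
  | _ j ih =>
    obtain ⟨r, l, hl, rfl, heq⟩ := hT.exists_eq_add hj hjn
    rw [heq]
    by_cases hl_heavy : l ≤ 3 * n ∨ 4 * n < l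
    · have hTr : 0 ≤ T r := hT.nonneg (fun _ => hw.weight_nonneg) (by omega)
      calc
        C ≤ w l + w k := hw.const_le_weight_add_weight hl (by omega) hl_heavy hk hkn hk_heavy
        _ ≤ T r + w l + w k := by gcongr; exact le_add_of_nonneg_left hTr
    · have hwl : 0 ≤ w l := hw.weight_nonneg hl (by omega)
      calc
        C ≤ T r + w k := ih r (by omega) (by omega) (by omega) (by omega)
        _ ≤ T r + w l + w k := by gcongr; exact le_add_of_nonneg_right hwl

theorem const_le_table_or_mem_minPlusSums (hw : IsConvolutionWeights n C a b w)
    (hT : IsCoinChangeTable_s7 (6 * n) w T) {j s : ℕ} (hj : 4 * n < j) (hjs : j + s = 6 * n) :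
    C ≤ T j ∨ T j ∈ minPlusSums n a b s := by
  obtain ⟨r, k, hk, rfl, heq⟩ := hT.exists_eq_add (j := j) (by omega) (by omega)
  rw [heq]
  obtain rfl | hr := Nat.eq_zero_or_pos r
  · rw [hT.zero, zero_add]
    exact .inl (hw.last_const k (by omega) (by omega)).ge
  by_cases h_heavy : (r ≤ 3 * n ∨ 4 * n < r) ∧ (k ≤ 3 * n ∨ 4 * n < k)
  · exact .inl (hw.const_le_table_add_weight hT hr (by omega) h_heavy.1 hk (by omega) h_heavy.2)
  · rw [hw.table_eq_weight hT hr (by omega)]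
    exact hw.const_le_weight_add_weight_or_mem_minPlusSums hr hk hjs

theorem table_le_of_mem_minPlusSums (hw : IsConvolutionWeights n C a b w)
    (hT : IsCoinChangeTable_s7 (6 * n) w T) {j s : ℕ} (hjs : j + s = 6 * n) {c : R}
    (hc : c ∈ minPlusSums n a b s) : T j ≤ c := by
  obtain ⟨x, y, hx, hy, hxy, rfl⟩ := hc
  obtain rfl : j = (2 * n - x) + (4 * n - y) := by omega
  rw [← hw.weight_eq_left (k := 2 * n - x) hx (by omega),
    ← hw.weight_eq_right (k := 4 * n - y) hy (by omega)]
  exact hT.le_weight_add_weight (by omega) (by omega) (by omega)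

theorem isLeast_insert_const_table (hw : IsConvolutionWeights n C a b w)
    (hT : IsCoinChangeTable_s7 (6 * n) w T) {j s : ℕ} (hj : 4 * n < j) (hjs : j + s = 6 * n) :
    IsLeast (insert C (minPlusSums n a b s)) (T j) := by
  have hle : T j ≤ C :=
    (hT.le_weight (by omega) (by omega)).trans_eq (hw.last_const j hj (by omega))
  refine ⟨(hw.const_le_table_or_mem_minPlusSums hT hj hjs).imp_left hle.antisymm, ?_⟩
  rintro c (rfl | hc)
  · exact hle
  · exact hw.table_le_of_mem_minPlusSums hT hjs hc

end IsConvolutionWeights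

section MinPlusSums

variable {R : Type*} [Add R] {n s : ℕ} {a b : ℕ → R}

theorem minPlusSums_eq_empty (hs : 2 * n ≤ s + 1) : minPlusSums n a b s = ∅ := by
  refine Set.eq_empty_of_forall_notMem ?_
  rintro _ ⟨x, y, hx, hy, hxy, -⟩
  omega

theorem minPlusSums_nonempty (hs : s + 2 ≤ 2 * n) : (minPlusSums n a b s).Nonempty :=
  ⟨_, min s (n - 1), s - min s (n - 1), by omega, by omega, by omega, rfl⟩

end MinPlusSums

theorem stmt_7_general {R : Type*} [AddCommMonoid R] [LinearOrder R] [IsOrderedAddMonoid R]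
    {n : ℕ} {C : R} {a b w T : ℕ → R} (hw : IsConvolutionWeights n C a b w)
    (hT : IsCoinChangeTable_s7 (6 * n) w T) {i : ℕ} (hi : 1 ≤ i) (hin : i ≤ 2 * n) :
    (i = 1 → T (4 * n + i) = C) ∧
      (i ≠ 1 → IsLeast (minPlusSums n a b (2 * n - i)) (T (4 * n + i))) := by
  obtain ⟨hmem, hlower⟩ :=
    hw.isLeast_insert_const_table hT (j := 4 * n + i) (s := 2 * n - i) (by omega) (by omega)
  constructor
  · intro hi1
    rwa [minPlusSums_eq_empty (by omega), insert_empty_eq, Set.mem_singleton_iff] at hmem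
  · intro hi1
    refine ⟨?_, fun c hc => hlower (.inr hc)⟩
    rcases hmem with hC | hsum
    · obtain ⟨c, hc⟩ := minPlusSums_nonempty (a := a) (b := b) (s := 2 * n - i) (n := n) (by omega)
      obtain rfl : c = T (4 * n + i) :=
        ((hw.le_const_of_mem_minPlusSums hc).trans_eq hC.symm).antisymm (hlower (.inr hc))
      exact hc
    · exact hsum

/-- In the reduction from `(min,+)`-convolution to the coin change
problem, with `M = 2W+1`, `2M ≤ a_i ≤ 3M`, `0 ≤ b_i ≤ M`, coin weights
`w = (4M)^n ∘ (a_{n−1},…,a_0) ∘ (4M)^n ∘ (b_{n−1},…,b_0) ∘ (4M)^{2n}`, and the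
convention `(a∗b)_{2n−1} := 4M` (the case `i = 1` below), the coin-change table
`T` satisfies `T[4n+i] = (a∗b)_{2n−i}` for all `1 ≤ i ≤ 2n`. -/
theorem stmt_7 (n : ℕ) (hn : 1 ≤ n) (W M : ℤ) (hW : 0 ≤ W) (hM : M = 2 * W + 1)
    (a b : ℕ → ℤ)
    (ha : ∀ i, i < n → 2 * M ≤ a i ∧ a i ≤ 3 * M)
    (hb : ∀ i, i < n → 0 ≤ b i ∧ b i ≤ M)
    (w : ℕ → ℤ)
    (hw1 : ∀ i, 1 ≤ i → i ≤ n → w i = 4 * M)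
    (hw2 : ∀ i, 1 ≤ i → i ≤ n → w (n + i) = a (n - i))
    (hw3 : ∀ i, 1 ≤ i → i ≤ n → w (2 * n + i) = 4 * M)
    (hw4 : ∀ i, 1 ≤ i → i ≤ n → w (3 * n + i) = b (n - i))
    (hw5 : ∀ i, 4 * n < i → i ≤ 6 * n → w i = 4 * M)
    (T : ℕ → ℤ) (hT0 : T 0 = 0)
    (hT : ∀ j, (hj : 1 ≤ j) → j ≤ 6 * n →
      T j = (Finset.Icc 1 j).inf' (Finset.nonempty_Icc.mpr hj)
        (fun k => T (j - k) + w k)) :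
    ∀ i, 1 ≤ i → i ≤ 2 * n →
      ((T (4 * n + i) : ℤ) : WithTop ℤ)
        = if i = 1 then ((4 * M : ℤ) : WithTop ℤ) else minPlusConv n a b (2 * n - i) := by
  intro i hi hin
  have hweights : IsConvolutionWeights n (4 * M) a b w :=
    ⟨fun x hx => by linarith [ha x hx], fun y hy => (hb y hy).1,
      fun x hx x' hx' => by linarith [ha x hx, ha x' hx'],
      fun x hx y hy => by linarith [ha x hx, hb y hy], hw1, hw2, hw3, hw4, hw5⟩
  obtain ⟨h_one, h_least⟩ := stmt_7_general hweights ⟨hT0, hT⟩ hi hin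
  split_ifs with hi1
  · rw [h_one hi1]
  · exact (minPlusConv_eq_coe_of_isLeast (h_least hi1)).symm
end

section
/- Let n ≥ 1, W ≥ 1, and let w_1,…,w_n ∈ ℤ satisfy |w_i| ≤ W for all i. Let M be an integer with M ≥ 2nW. For a finite multiset S of elements of {1,…,n}, let d(S) denote the sum of its elements (with multiplicity), w(S) = Σ_{i ∈ S} w_i, and p(S) = Σ_{i ∈ S} (i·M − w_i) (all sums with multiplicity). Then the maximum of p(S) over all multisets S with d(S) ≤ n equals n·M minus the minimum of w(S) over all multisets S with d(S) = n. -/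
/-!
Since `p(S) = d(S)·M - w(S)`, on the multisets with `d(S) = n` maximizing `p` is the same as
minimizing `w`. Adding a copy of `1` to `S` raises `d(S)` by one and changes `p(S)` by
`M - w 1 ≥ 0`, so every multiset with `d(S) ≤ n` can be filled up with ones to one with `d(S) = n`
without loss of profit. The minimum exists because `n` has finitely many
partitions.
-/

/-- The total weights of the multisets of coins from `{1, …, n}` that make change for `n`, where
a coin `i` has weight `w i`: the objective values of the coin change problem. -/
def changeWeights {G : Type*} [AddCommMonoid G] (n : ℕ) (w : ℕ → G) : Set G :=
  {z | ∃ S : Multiset ℕ, (∀ i ∈ S, 1 ≤ i ∧ i ≤ n) ∧ S.sum = n ∧ (S.map w).sum = z}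

/-- The total profits of the multisets of items from `{1, …, n}` that fit into capacity `n`, where
an item `i` has size `i` and profit `p i`: the objective values of unbounded Knapsack. -/
def knapsackProfits {G : Type*} [AddCommMonoid G] (n : ℕ) (p : ℕ → G) : Set G :=
  {z | ∃ S : Multiset ℕ, (∀ i ∈ S, 1 ≤ i ∧ i ≤ n) ∧ S.sum ≤ n ∧ (S.map p).sum = z}

theorem finite_setOf_pos_sum_eq (n : ℕ) :
    {S : Multiset ℕ | (∀ i ∈ S, 1 ≤ i) ∧ S.sum = n}.Finite :=
  (Set.finite_range (Nat.Partition.parts (n := n))).subset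
    fun S ⟨hpos, hsum⟩ => ⟨⟨S, hpos _, hsum⟩, rfl⟩

theorem sum_map_nsmul_sub {G : Type*} [AddCommGroup G] (w : ℕ → G) (M : G) (S : Multiset ℕ) :
    (S.map fun i => i • M - w i).sum = S.sum • M - (S.map w).sum := by
  rw [Multiset.sum_map_sub, Multiset.sum_smul]

section AddCommMonoid

variable {G : Type*} [AddCommMonoid G] (n : ℕ) (w : ℕ → G)

theorem changeWeights_finite : (changeWeights n w).Finite :=
  ((finite_setOf_pos_sum_eq n).image fun S => (S.map w).sum).subset
    fun _ ⟨S, hS, hsum, hz⟩ => ⟨S, ⟨fun i hi => (hS i hi).1, hsum⟩, hz⟩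

theorem changeWeights_nonempty : (changeWeights n w).Nonempty := by
  refine ⟨_, Multiset.replicate n 1, fun i hi => ?_, by simp, rfl⟩
  obtain ⟨hn, rfl⟩ := Multiset.mem_replicate.mp hi
  exact ⟨le_rfl, Nat.one_le_iff_ne_zero.mpr hn⟩

end AddCommMonoid

theorem exists_sum_map_eq_add_nsmul_one {G : Type*} [AddCommMonoid G] {n : ℕ} {S : Multiset ℕ}
    (hS : ∀ i ∈ S, 1 ≤ i ∧ i ≤ n) (hsum : S.sum ≤ n) (p : ℕ → G) :
    ∃ T : Multiset ℕ, (∀ i ∈ T, 1 ≤ i ∧ i ≤ n) ∧ T.sum = n ∧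
      (T.map p).sum = (S.map p).sum + (n - S.sum) • p 1 := by
  refine ⟨S + Multiset.replicate (n - S.sum) 1, fun i hi => ?_, by simp [hsum], by simp⟩
  rcases Multiset.mem_add.mp hi with hi | hi
  · exact hS i hi
  · obtain ⟨hk, rfl⟩ := Multiset.mem_replicate.mp hi
    omega

theorem isGreatest_knapsackProfits {G : Type*} [AddCommGroup G] [PartialOrder G]
    [IsOrderedAddMonoid G] {n : ℕ} {w : ℕ → G} {M m : G} (hM : w 1 ≤ M)
    (hm : IsLeast (changeWeights n w) m) :
    IsGreatest (knapsackProfits n fun i => i • M - w i) (n • M - m) := by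
  constructor
  · obtain ⟨S, hS, hsum, rfl⟩ := hm.1
    exact ⟨S, hS, hsum.le, by rw [sum_map_nsmul_sub, hsum]⟩
  · rintro _ ⟨S, hS, hsum, rfl⟩
    obtain ⟨T, hT, hTsum, hTp⟩ :=
      exists_sum_map_eq_add_nsmul_one hS hsum fun i => i • M - w i
    have hone : 0 ≤ 1 • M - w 1 := by rwa [one_nsmul, sub_nonneg]
    calc (S.map fun i => i • M - w i).sum
        ≤ (S.map fun i => i • M - w i).sum + (n - S.sum) • (1 • M - w 1) :=
          le_add_of_nonneg_right (nsmul_nonneg hone _)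
      _ = (T.map fun i => i • M - w i).sum := hTp.symm
      _ = n • M - (T.map w).sum := by rw [sum_map_nsmul_sub, hTsum]
      _ ≤ n • M - m := sub_le_sub_left (hm.2 ⟨T, hT, hTsum, rfl⟩) _

theorem stmt_10_general {G : Type*} [AddCommGroup G] [ConditionallyCompleteLinearOrder G]
    [IsOrderedAddMonoid G] (n : ℕ) (w : ℕ → G) (M : G) (hM : w 1 ≤ M) :
    sSup (knapsackProfits n fun i => i • M - w i) = n • M - sInf (changeWeights n w) := by
  have hmin : sInf (changeWeights n w) ∈ changeWeights n w :=
    (changeWeights_nonempty n w).csInf_mem (changeWeights_finite n w)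
  have hleast : IsLeast (changeWeights n w) (sInf (changeWeights n w)) :=
    ⟨hmin, fun _ hz => csInf_le (changeWeights_finite n w).bddBelow hz⟩
  exact (isGreatest_knapsackProfits hM hleast).csSup_eq

/-- In the reduction from the coin change problem to unbounded
Knapsack, with `|w_i| ≤ W` and `M ≥ 2nW`, and profits `p_i = i·M − w_i`, the
maximum of `p(S) = Σ_{i∈S} (i·M − w_i)` over all multisets `S` of elements of
`{1,…,n}` with `d(S) = Σ_{i∈S} i ≤ n` equals `n·M` minus the minimum of
`w(S) = Σ_{i∈S} w_i` over all multisets `S` with `d(S) = n`. -/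
theorem stmt_10 (n : ℕ) (hn : 1 ≤ n) (W : ℤ) (hW : 1 ≤ W) (w : ℕ → ℤ)
    (hw : ∀ i, 1 ≤ i → i ≤ n → |w i| ≤ W)
    (M : ℤ) (hM : 2 * (n : ℤ) * W ≤ M) :
    sSup {z : ℤ | ∃ S : Multiset ℕ, (∀ i ∈ S, 1 ≤ i ∧ i ≤ n) ∧ S.sum ≤ n ∧
        (S.map (fun i : ℕ => (i : ℤ) * M - w i)).sum = z}
      = (n : ℤ) * M -
        sInf {z : ℤ | ∃ S : Multiset ℕ, (∀ i ∈ S, 1 ≤ i ∧ i ≤ n) ∧ S.sum = n ∧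
          (S.map w).sum = z} := by
  have hw1 : w 1 ≤ M := by
    have : w 1 ≤ W := (abs_le.mp (hw 1 le_rfl hn)).2
    have : (1 : ℤ) ≤ n := mod_cast hn
    nlinarith
  simpa only [knapsackProfits, changeWeights, nsmul_eq_mul] using stmt_10_general n w M hw1
end

section
/- Let M ≥ 2 and W ≥ 1 be integers, let w̃_1,…,w̃_M ∈ ℤ with |w̃_i| ≤ W for all i, and let r̃_1,…,r̃_M ∈ ℤ with |r̃_i| ≤ W for all i. Set C = 3MW. Define weights w′_1,…,w′_{2M+1} by: w′_i = w̃_i for 1 ≤ i ≤ M; w′_{2M+1−i} = −C − r̃_i for 1 ≤ i ≤ M; and w′_{2M+1} = C. For 1 ≤ i ≤ M let T^J[i] denote the minimum of Σ_{k ∈ S} w̃_k over all multisets S of elements of {1,…,M} whose elements sum to i, and let T^K denote the minimum of Σ_{k ∈ S} w′_k over all multisets S of elements of {1,…,2M+1} whose elements sum to 2M+1. Then T^K ≤ −C if and only if there exists i ∈ {1,…,M} with T^J[i] ≤ r̃_i. -/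
/-!
A multiset of elements of `{1, …, M}` summing to `2M + 1` weighs more than `-C`, because each
element `k` weighs more than `-kC / (2M + 1)`. A multiset of weight at most `-C` therefore contains
an element above `M`, and only one, as two of them exceed `2M + 1` in total. That element is not
`2M + 1`, whose weight is `C`, so it is `2M + 1 - i` for some `1 ≤ i ≤ M`; the remaining elements
sum to `i`, and the weight `-C - r i` makes the total at most `-C` exactly when they weigh at most
`r i`.
-/

/-- The ways of changing the amount `n` with coins of denominations `1, …, N`: the multisets of
elements of `{1, …, N}` with sum `n`. -/
def coinChanges (N n : ℕ) : Set (Multiset ℕ) :=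
  {S | (∀ k ∈ S, 1 ≤ k ∧ k ≤ N) ∧ S.sum = n}

/-- The coin change value: the least total weight of a multiset of elements of `{1, …, N}` with sum
`n`, the element `k` having weight `w k`. It is a genuine minimum whenever `coinChanges N n` is
nonempty, in particular for `1 ≤ N`. -/
noncomputable def minWeight {R : Type*} [AddCommMonoid R] [InfSet R] (N : ℕ) (w : ℕ → R) (n : ℕ) :
    R :=
  sInf ((fun S : Multiset ℕ => (S.map w).sum) '' coinChanges N n)

section CoinChanges

variable {M N n k : ℕ} {S T : Multiset ℕ}

theorem coinChanges_finite (N n : ℕ) : (coinChanges N n).Finite :=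
  (Set.finite_range (Nat.Partition.parts (n := n))).subset
    fun S hS => ⟨⟨S, fun hk => (hS.1 _ hk).1, hS.2⟩, rfl⟩

theorem coinChanges_nonempty (hN : 1 ≤ N) (n : ℕ) : (coinChanges N n).Nonempty := by
  refine ⟨Multiset.replicate n 1, fun k hk => ?_, by simp⟩
  rw [Multiset.eq_of_mem_replicate hk]
  exact ⟨le_rfl, hN⟩

theorem coinChanges_mono (hMN : M ≤ N) : coinChanges M n ⊆ coinChanges N n :=
  fun _ hS => ⟨fun k hk => ⟨(hS.1 k hk).1, (hS.1 k hk).2.trans hMN⟩, hS.2⟩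

theorem coinChanges_subset_of_le (hn : n ≤ M) : coinChanges N n ⊆ coinChanges M n :=
  fun _ hS => ⟨fun k hk => ⟨(hS.1 k hk).1, (Multiset.le_sum_of_mem hk).trans (hS.2.trans_le hn)⟩,
    hS.2⟩

theorem coinChanges_zero (N : ℕ) : coinChanges N 0 = {0} := by
  ext S
  refine ⟨fun hS => Multiset.eq_zero_of_forall_notMem fun k hk => ?_, ?_⟩
  · have := (hS.1 k hk).1
    have := Multiset.sum_eq_zero_iff.1 hS.2 k hk
    omega
  · rintro rfl
    simp [coinChanges]

theorem cons_mem_coinChanges_iff :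
    k ::ₘ T ∈ coinChanges N n ↔ (1 ≤ k ∧ k ≤ N) ∧ k ≤ n ∧ T ∈ coinChanges N (n - k) := by
  simp only [coinChanges, Set.mem_ofPred_eq, Multiset.forall_mem_cons, Multiset.sum_cons]
  grind

theorem mem_coinChanges_self_iff (hMn : M < n) (hn : n ≤ 2 * M + 1) :
    S ∈ coinChanges n n ↔
      S ∈ coinChanges M n ∨ ∃ i ≤ M, ∃ T ∈ coinChanges M i, S = (n - i) ::ₘ T := by
  constructor
  · intro hS
    by_cases hsmall : ∀ k ∈ S, k ≤ M
    · exact Or.inl ⟨fun k hk => ⟨(hS.1 k hk).1, hsmall k hk⟩, hS.2⟩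
    · push Not at hsmall
      obtain ⟨k, hk, hMk⟩ := hsmall
      obtain ⟨T, rfl⟩ := Multiset.exists_cons_of_mem hk
      obtain ⟨-, hkn, hT⟩ := cons_mem_coinChanges_iff.1 hS
      have hrest : n - k ≤ M := by omega
      exact Or.inr ⟨n - k, hrest, T, coinChanges_subset_of_le hrest hT, by
        rw [Nat.sub_sub_self hkn]⟩
  · rintro (hS | ⟨i, hi, T, hT, rfl⟩)
    · exact coinChanges_mono hMn.le hS
    · refine cons_mem_coinChanges_iff.2 ⟨by omega, by omega, ?_⟩
      rw [Nat.sub_sub_self (by omega)]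
      exact coinChanges_mono hMn.le hT

end CoinChanges

section Weights

variable {R : Type*} {M N n : ℕ} {w w' : ℕ → R} {t : R}

theorem sum_map_congr_of_mem_coinChanges [AddCommMonoid R] {S : Multiset ℕ}
    (hS : S ∈ coinChanges N n) (hw : ∀ k, 1 ≤ k → k ≤ N → w k = w' k) :
    (S.map w).sum = (S.map w').sum :=
  congrArg Multiset.sum <|
    Multiset.map_congr rfl fun k hk => hw k (hS.1 k hk).1 (hS.1 k hk).2

theorem lt_sum_map_of_mem_coinChanges [AddCommMonoid R] [LinearOrder R]
    [IsOrderedCancelAddMonoid R] {S : Multiset ℕ} (hS : S ∈ coinChanges N n) (hn : n ≠ 0)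
    (hw : ∀ k, 1 ≤ k → k ≤ N → k • t < n • w k) : t < (S.map w).sum := by
  have hS0 : S ≠ ∅ := by
    rintro rfl
    exact hn hS.2.symm
  refine lt_of_nsmul_lt_nsmul_right n ?_
  calc n • t = (S.map fun k => k • t).sum := by
        rw [← hS.2, Multiset.sum_smul]
    _ < (S.map fun k => n • w k).sum :=
        Multiset.sum_lt_sum_of_nonempty hS0 fun k hk => hw k (hS.1 k hk).1 (hS.1 k hk).2
    _ = n • (S.map w).sum := Multiset.sum_map_nsmul

theorem minWeight_eq_sInf [AddCommMonoid R] [InfSet R] (N : ℕ) (w : ℕ → R) (n : ℕ) :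
    minWeight N w n = sInf {z : R | ∃ S : Multiset ℕ,
      (∀ k ∈ S, 1 ≤ k ∧ k ≤ N) ∧ S.sum = n ∧ (S.map w).sum = z} := by
  simp only [minWeight, coinChanges, Set.image, Set.mem_ofPred_eq, and_assoc]

theorem minWeight_le_iff [AddCommMonoid R] [ConditionallyCompleteLinearOrder R] (hN : 1 ≤ N) :
    minWeight N w n ≤ t ↔ ∃ S ∈ coinChanges N n, (S.map w).sum ≤ t := by
  rw [minWeight, ← not_lt, ((coinChanges_finite N n).image _).lt_csInf_iff
    ((coinChanges_nonempty hN n).image _)]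
  simp

end Weights

theorem stmt_11_general {R : Type*} [AddCommGroup R] [ConditionallyCompleteLinearOrder R]
    [IsOrderedAddMonoid R] (M : ℕ) {C : R} (hC : 0 < C) (wt r w' : ℕ → R)
    (hwt : ∀ i, 1 ≤ i → i ≤ M → i • -C < (2 * M + 1) • wt i)
    (hw'_small : ∀ i, 1 ≤ i → i ≤ M → w' i = wt i)
    (hw'_large : ∀ i, 1 ≤ i → i ≤ M → w' (2 * M + 1 - i) = -C - r i)
    (hw'_top : w' (2 * M + 1) = C) :
    minWeight (2 * M + 1) w' (2 * M + 1) ≤ -C ↔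
      ∃ i, 1 ≤ i ∧ i ≤ M ∧ minWeight M wt i ≤ r i := by
  have weight_cons {i : ℕ} (hi : 1 ≤ i) (hiM : i ≤ M) {T : Multiset ℕ} (hT : T ∈ coinChanges M i) :
      (((2 * M + 1 - i) ::ₘ T).map w').sum ≤ -C ↔ (T.map wt).sum ≤ r i := by
    rw [Multiset.map_cons, Multiset.sum_cons, hw'_large i hi hiM,
      sum_map_congr_of_mem_coinChanges hT hw'_small, sub_add_eq_add_sub, sub_le_iff_le_add,
      add_le_add_iff_left]
  rw [minWeight_le_iff (by omega)]
  constructor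
  · rintro ⟨S, hS, hle⟩
    obtain hS | ⟨i, hiM, T, hT, rfl⟩ := (mem_coinChanges_self_iff (by omega) le_rfl).1 hS
    · rw [sum_map_congr_of_mem_coinChanges hS hw'_small] at hle
      exact absurd hle (lt_sum_map_of_mem_coinChanges hS (by omega) hwt).not_ge
    · obtain rfl | hi := Nat.eq_zero_or_pos i
      · obtain rfl : T = 0 := by simpa [coinChanges_zero] using hT
        have hCle : C ≤ -C := by simpa [hw'_top] using hle
        exact absurd hCle (neg_lt_self hC).not_ge
      · exact ⟨i, hi, hiM, (minWeight_le_iff (Nat.le_trans hi hiM)).2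
          ⟨T, hT, (weight_cons hi hiM hT).1 hle⟩⟩
  · rintro ⟨i, hi, hiM, hle⟩
    obtain ⟨T, hT, hTle⟩ := (minWeight_le_iff (hi.trans hiM)).1 hle
    exact ⟨_, (mem_coinChanges_self_iff (by omega) le_rfl).2 (.inr ⟨i, hiM, T, hT, rfl⟩),
      (weight_cons hi hiM hT).2 hTle⟩

theorem nsmul_neg_lt_nsmul_of_neg_le {R : Type*} [CommRing R] [LinearOrder R]
    [IsStrictOrderedRing R] {M i : ℕ} (hM : 2 ≤ M) (hi : 1 ≤ i) {W x : R} (hW : 0 < W)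
    (hx : -W ≤ x) : i • -(3 * (M : R) * W) < (2 * M + 1) • x := by
  calc i • -(3 * (M : R) * W) ≤ -(3 * M * W) := by
        rw [nsmul_eq_mul, mul_neg, neg_le_neg_iff]
        exact le_mul_of_one_le_left (by positivity) (mod_cast hi)
    _ < (2 * M + 1) * -W := by
        have : (1 : R) < M := mod_cast hM
        nlinarith
    _ ≤ (2 * M + 1) * x := by gcongr
    _ = (2 * M + 1) • x := by simp

/-- In the reduction of the problem `P` (deciding whether
`T^J[i] ≤ r̃_i` for some `i`) to the coin change problem: with `C = 3MW`,
weights `w′_i = w̃_i` for `1 ≤ i ≤ M`, `w′_{2M+1−i} = −C − r̃_i` for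
`1 ≤ i ≤ M`, and `w′_{2M+1} = C`, letting `T^J[i]` be the minimum weight of a
multiset of `{1,…,M}` summing to `i` and `T^K` the minimum `w′`-weight of a
multiset of `{1,…,2M+1}` summing to `2M+1`, we have `T^K ≤ −C` iff there is
some `i ∈ {1,…,M}` with `T^J[i] ≤ r̃_i`. -/
theorem stmt_11 (M : ℕ) (hM : 2 ≤ M) (W : ℤ) (hW : 1 ≤ W)
    (wt r : ℕ → ℤ)
    (hwt : ∀ i, 1 ≤ i → i ≤ M → |wt i| ≤ W)
    (hr : ∀ i, 1 ≤ i → i ≤ M → |r i| ≤ W)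
    (C : ℤ) (hC : C = 3 * (M : ℤ) * W)
    (w' : ℕ → ℤ)
    (hw'1 : ∀ i, 1 ≤ i → i ≤ M → w' i = wt i)
    (hw'2 : ∀ i, 1 ≤ i → i ≤ M → w' (2 * M + 1 - i) = -C - r i)
    (hw'3 : w' (2 * M + 1) = C)
    (TJ : ℕ → ℤ)
    (hTJ : ∀ i, TJ i = sInf {z : ℤ | ∃ S : Multiset ℕ,
        (∀ k ∈ S, 1 ≤ k ∧ k ≤ M) ∧ S.sum = i ∧ (S.map wt).sum = z})
    (TK : ℤ)
    (hTK : TK = sInf {z : ℤ | ∃ S : Multiset ℕ,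
        (∀ k ∈ S, 1 ≤ k ∧ k ≤ 2 * M + 1) ∧ S.sum = 2 * M + 1 ∧ (S.map w').sum = z}) :
    TK ≤ -C ↔ ∃ i, 1 ≤ i ∧ i ≤ M ∧ TJ i ≤ r i := by
  simp only [hTJ, hTK, ← minWeight_eq_sInf]
  subst hC
  exact stmt_11_general M (by positivity) wt r w'
    (fun i hi hiM =>
      nsmul_neg_lt_nsmul_of_neg_le hM hi (by positivity) (neg_le_of_abs_le (hwt i hi hiM)))
    hw'1 hw'2 hw'3
end
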